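/- Assume (A_f) holds with parameters ρ > 0, α ≥ 0, γ > −α, and let (S,Y,B) be an adapted process with B a one-dimensional Brownian motion, Y a nonnegative process satisfying hypothesis (A_Y) (parts (a)–(d)), and S a nonnegative process solving S_t = S_0 + ∫_0^t (2f(s,Y_s)+1) ds + 2∫_0^t √(S_s) dB_s. Then for X_t = √(S_t): (1) almost surely lim_{t→∞} (log X_t)/(log t) = (1+γ+α)/2; and (2) t^{-(1+γ+α)/2} X_t converges in distribution to (2ρÃ)^{1/2} as t → ∞, where Ã is the distributional limit in (A_Y)(b). -/

import Mathlib

/-!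
Write `S = S₀ + D + M` with `D_t = ∫₀ᵗ (2 f(s, Y_s) + 1) ds`, `A_t = ∫₁ᵗ s^γ Y_s^α ds` and
`p = 1 + γ + α > 1`. The power asymptotics of `f` give `D = 2ρA + o(A + t^p)` along each path, and
`E[D_t] = O(t^p)` by (A_Y)(a) and (d). Since `E[S_t] ≤ E[S₀] + E[D_t]`, the quadratic variation
`4 ∫₀ᵗ S` of `M` has mean `O(t^(p+1))`, so Doob's inequality and Borel–Cantelli along `t = 2^n` give
`M = O(t^q)` a.s. for every `q > (p + 1) / 2`. As `p > 1`, some such `q` is less than `p`, so `M` is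
negligible and `S = 2ρA + o(A + t^p)` a.s.

For the logarithms, `A` is at least `t^(p-ε)` by (A_Y)(c) and at most `t^(p+ε)` by Markov's
inequality and Borel–Cantelli. For the limit law, `S_t / t^p - 2ρ A_t / t^p` is the product of the
tight family `A_t / t^p + 1` and an error tending to `0`.
-/

open MeasureTheory Filter Set

/-- The martingale part of the SDE `S_t = S_0 + ∫_0^t (2 f(s,Y_s) + 1) ds + M_t`,
i.e. `M_t = 2∫_0^t √(S_s) dB_s` recovered from the dynamics of `S`. -/
noncomputable def driftM {Ω : Type*} (f : ℝ → ℝ → ℝ) (Y S : ℝ → Ω → ℝ) (t : ℝ) (ω : Ω) : ℝ :=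
  S t ω - S 0 ω - ∫ s in (0:ℝ)..t, (2 * f s (Y s ω) + 1)

open Asymptotics Topology
open scoped ENNReal BoundedContinuousFunction Interval

section Powers

lemma sqrt_rpow_eq_rpow_half {t : ℝ} (ht : 0 ≤ t) (p : ℝ) : √(t ^ p) = t ^ (p / 2) := by
  rw [Real.sqrt_eq_rpow, ← Real.rpow_mul ht, mul_one_div]

lemma isLittleO_rpow_rpow_of_lt {a b : ℝ} (hab : a < b) :
    (fun t : ℝ => t ^ a) =o[atTop] fun t : ℝ => t ^ b := by
  refine (isLittleO_iff_tendsto' ?_).2 ?_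
  · filter_upwards [eventually_gt_atTop 0] with t ht h
    exact absurd h (Real.rpow_pos_of_pos ht b).ne'
  · refine (tendsto_rpow_neg_atTop (sub_pos.2 hab)).congr' ?_
    filter_upwards [eventually_gt_atTop 0] with t ht
    rw [neg_sub, Real.rpow_sub ht]

lemma isBigO_rpow_rpow_of_le {a b : ℝ} (hab : a ≤ b) :
    (fun t : ℝ => t ^ a) =O[atTop] fun t : ℝ => t ^ b := by
  rcases hab.eq_or_lt with rfl | hab
  · exact isBigO_refl _ _
  · exact (isLittleO_rpow_rpow_of_lt hab).isBigO

lemma isLittleO_const_rpow (c : ℝ) {b : ℝ} (hb : 0 < b) :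
    (fun _ : ℝ => c) =o[atTop] fun t : ℝ => t ^ b :=
  isLittleO_const_left.2 <| .inr <| tendsto_norm_atTop_atTop.comp (tendsto_rpow_atTop hb)

lemma rpow_le_two_rpow_abs_mul {x y : ℝ} (p : ℝ) (hx : 0 < x) (hxy : x ≤ y) (hy : y ≤ 2 * x) :
    y ^ p ≤ 2 ^ |p| * x ^ p := by
  have h1 : 1 ≤ y / x := (one_le_div hx).2 hxy
  calc y ^ p = (y / x) ^ p * x ^ p := by
        rw [← Real.mul_rpow (by positivity) hx.le, div_mul_cancel₀ _ hx.ne']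
    _ ≤ (y / x) ^ |p| * x ^ p := by gcongr; exact le_abs_self p
    _ ≤ 2 ^ |p| * x ^ p := by gcongr; exact (div_le_iff₀ hx).2 hy

lemma one_add_rpow_le_mul_max_rpow {x : ℝ} (p : ℝ) (hx : 0 ≤ x) :
    (1 + x) ^ p ≤ 2 ^ |p| * (max 1 x) ^ p := by
  refine rpow_le_two_rpow_abs_mul p (by positivity) (max_le ?_ ?_) ?_ <;>
    linarith [le_max_left 1 x, le_max_right 1 x]

lemma isEquivalent_one_add_rpow (p : ℝ) :
    (fun s : ℝ => (1 + s) ^ p) ~[atTop] fun s : ℝ => s ^ p := by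
  have hratio : Tendsto (fun s : ℝ => (1 + s⁻¹) ^ p) atTop (𝓝 1) := by
    simpa using (tendsto_inv_atTop_zero.const_add (1 : ℝ)).rpow_const (p := p) (by norm_num)
  refine isEquivalent_of_tendsto_one (hratio.congr' ?_)
  filter_upwards [eventually_gt_atTop 0] with s hs
  rw [Pi.div_apply, ← Real.div_rpow (by positivity) hs.le, add_div, div_self hs.ne', one_div,
    add_comm]

lemma eventually_one_add_rpow_le (p : ℝ) {ε : ℝ} (hε : 0 < ε) :
    ∀ᶠ s : ℝ in atTop, (1 + s) ^ p ≤ (1 + ε) * s ^ p := by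
  filter_upwards [(isEquivalent_one_add_rpow p).isLittleO.bound hε, eventually_gt_atTop 0]
    with s hs hs0
  rw [Pi.sub_apply, Real.norm_of_nonneg (Real.rpow_nonneg hs0.le p)] at hs
  linarith [le_of_abs_le hs]

lemma eventually_le_one_add_rpow (p : ℝ) {ε : ℝ} (hε : 0 < ε) :
    ∀ᶠ s : ℝ in atTop, (1 - ε) * s ^ p ≤ (1 + s) ^ p := by
  filter_upwards [(isEquivalent_one_add_rpow p).isLittleO.bound hε, eventually_gt_atTop 0]
    with s hs hs0
  rw [Pi.sub_apply, Real.norm_of_nonneg (Real.rpow_nonneg hs0.le p)] at hs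
  linarith [neg_le_of_abs_le hs]

lemma eventually_forall_one_add_rpow_le {α : ℝ} (hα : 0 ≤ α) {ε : ℝ} (hε : 0 < ε) :
    ∀ᶠ s : ℝ in atTop, ∀ y : ℝ, 0 ≤ y → (1 + y) ^ α ≤ (1 + ε) * y ^ α + ε * s ^ α := by
  rcases hα.eq_or_lt with rfl | hα_pos
  · refine .of_forall fun s y _ => ?_
    simp only [Real.rpow_zero]
    linarith
  obtain ⟨R, hR⟩ := eventually_atTop.1 (eventually_one_add_rpow_le α hε)
  filter_upwards [(isLittleO_const_rpow ((1 + R) ^ α) hα_pos).bound hε, eventually_ge_atTop 0]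
    with s hs hs0 y hy
  have hsα : 0 ≤ s ^ α := Real.rpow_nonneg hs0 α
  have hyα : 0 ≤ y ^ α := Real.rpow_nonneg hy α
  rcases le_total R y with hRy | hyR
  · linarith [hR y hRy, mul_nonneg hε.le hsα]
  · have hmono : (1 + y) ^ α ≤ (1 + R) ^ α := by gcongr
    rw [Real.norm_of_nonneg hsα] at hs
    linarith [le_of_abs_le hs, mul_nonneg hε.le hyα]

end Powers

/-- Assumption (A_f): `f(t, y) / ((1 + t)^γ (1 + y)^α) → ρ` as `t + y → ∞` in the quadrant. -/
def HasPowerAsymptotics (f : ℝ → ℝ → ℝ) (ρ α γ : ℝ) : Prop :=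
  ∀ ε > (0 : ℝ), ∃ r ≥ (0 : ℝ), ∀ t y : ℝ, 0 ≤ t → 0 ≤ y → r ≤ t + y →
    |f t y * (1 + t) ^ (-γ) * (1 + y) ^ (-α) - ρ| ≤ ε

namespace HasPowerAsymptotics

variable {f : ℝ → ℝ → ℝ} {ρ α γ : ℝ}

lemma exists_abs_sub_le (hf : HasPowerAsymptotics f ρ α γ) {ε : ℝ} (hε : 0 < ε) :
    ∃ r, ∀ s y : ℝ, 0 ≤ s → 0 ≤ y → r ≤ s + y →
      |f s y - ρ * ((1 + s) ^ γ * (1 + y) ^ α)| ≤ ε * ((1 + s) ^ γ * (1 + y) ^ α) := by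
  obtain ⟨r, -, hr⟩ := hf ε hε
  refine ⟨r, fun s y hs hy hsy => ?_⟩
  have hw : 0 < (1 + s) ^ γ * (1 + y) ^ α := by positivity
  have hfw : f s y * (1 + s) ^ (-γ) * (1 + y) ^ (-α) = f s y / ((1 + s) ^ γ * (1 + y) ^ α) := by
    rw [Real.rpow_neg (by positivity), Real.rpow_neg (by positivity)]
    field_simp
  have h := hr s y hs hy hsy
  rwa [hfw, div_sub' hw.ne', abs_div, abs_of_pos hw, div_le_iff₀ hw, mul_comm _ ρ] at h

lemma eventually_mul_le (hf : HasPowerAsymptotics f ρ α γ) (hα : 0 ≤ α) {c : ℝ} (hc : 0 < c)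
    (hcρ : c < ρ) :
    ∀ᶠ s : ℝ in atTop, ∀ y : ℝ, 0 ≤ y → c * (s ^ γ * y ^ α) ≤ f s y := by
  obtain ⟨d, hcd, hdρ⟩ := exists_between hcρ
  have hd : 0 < d := hc.trans hcd
  obtain ⟨r, hr⟩ := hf.exists_abs_sub_le (sub_pos.2 hdρ)
  have hε : 0 < 1 - c / d := sub_pos.2 ((div_lt_one hd).2 hcd)
  filter_upwards [eventually_ge_atTop r, eventually_ge_atTop 0, eventually_le_one_add_rpow γ hε]
    with s hsr hs hγ y hy
  have hf_ge := neg_le_of_abs_le (hr s y hs hy (by linarith))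
  rw [sub_sub_cancel] at hγ
  calc c * (s ^ γ * y ^ α) = d * (c / d * s ^ γ * y ^ α) := by field_simp
    _ ≤ d * ((1 + s) ^ γ * (1 + y) ^ α) := by gcongr; linarith
    _ ≤ f s y := by linarith

lemma eventually_le_mul_add (hf : HasPowerAsymptotics f ρ α γ) (hρ : 0 ≤ ρ) (hα : 0 ≤ α) {c : ℝ}
    (hρc : ρ < c) {ε : ℝ} (hε : 0 < ε) :
    ∀ᶠ s : ℝ in atTop, ∀ y : ℝ, 0 ≤ y → f s y ≤ c * (s ^ γ * y ^ α) + ε * s ^ (γ + α) := by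
  obtain ⟨e, he, hec, heε⟩ :
      ∃ e > 0, (ρ + e) * (1 + e) * (1 + e) < c ∧ (ρ + e) * (1 + e) * e < ε := by
    have h1 : ContinuousAt (fun e : ℝ => (ρ + e) * (1 + e) * (1 + e)) 0 := by fun_prop
    have h2 : ContinuousAt (fun e : ℝ => (ρ + e) * (1 + e) * e) 0 := by fun_prop
    have h := (h1.eventually_lt_const (by simpa using hρc)).and
      (h2.eventually_lt_const (by simpa using hε))
    obtain ⟨e, he, he0⟩ := ((h.filter_mono nhdsWithin_le_nhds).and self_mem_nhdsWithin).exists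
      (f := 𝓝[>] (0 : ℝ))
    exact ⟨e, he0, he⟩
  obtain ⟨r, hr⟩ := hf.exists_abs_sub_le he
  filter_upwards [eventually_ge_atTop r, eventually_gt_atTop 0, eventually_one_add_rpow_le γ he,
    eventually_forall_one_add_rpow_le hα he] with s hsr hs hγ hα_le y hy
  have hf_le := le_of_abs_le (hr s y hs.le hy (by linarith))
  calc f s y ≤ (ρ + e) * ((1 + s) ^ γ * (1 + y) ^ α) := by linarith
    _ ≤ (ρ + e) * (((1 + e) * s ^ γ) * ((1 + e) * y ^ α + e * s ^ α)) := by
        gcongr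
        exact hα_le y hy
    _ = (ρ + e) * (1 + e) * (1 + e) * (s ^ γ * y ^ α)
          + (ρ + e) * (1 + e) * e * s ^ (γ + α) := by rw [Real.rpow_add hs]; ring
    _ ≤ c * (s ^ γ * y ^ α) + ε * s ^ (γ + α) := by gcongr

lemma exists_forall_le (hf : HasPowerAsymptotics f ρ α γ)
    (hf_cont : ContinuousOn (fun p : ℝ × ℝ => f p.1 p.2) (Ici 0 ×ˢ Ici 0)) :
    ∃ C > 0, ∀ s y : ℝ, 0 ≤ s → 0 ≤ y → f s y ≤ C * ((1 + s) ^ γ * (1 + y) ^ α) := by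
  obtain ⟨r, hr⟩ := hf.exists_abs_sub_le one_pos
  obtain ⟨B, hB⟩ := (isCompact_Icc.prod isCompact_Icc).exists_bound_of_continuousOn
    (s := Icc (0 : ℝ) r ×ˢ Icc (0 : ℝ) r)
    (f := fun p : ℝ × ℝ => f p.1 p.2 / ((1 + p.1) ^ γ * (1 + p.2) ^ α)) (by
      refine (hf_cont.mono (prod_mono Icc_subset_Ici_self Icc_subset_Ici_self)).div ?_ ?_
      · refine ContinuousOn.mul (ContinuousOn.rpow_const (by fun_prop) fun p hp => .inl ?_)
          (ContinuousOn.rpow_const (by fun_prop) fun p hp => .inl ?_)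
        · linarith [hp.1.1]
        · linarith [hp.2.1]
      · rintro p ⟨⟨h1, -⟩, h2, -⟩
        positivity)
  refine ⟨max 1 (max B (ρ + 1)), by positivity, fun s y hs hy => ?_⟩
  have hw : 0 < (1 + s) ^ γ * (1 + y) ^ α := by positivity
  rcases le_total r (s + y) with hsy | hsy
  · calc f s y ≤ (ρ + 1) * ((1 + s) ^ γ * (1 + y) ^ α) := by
          linarith [le_of_abs_le (hr s y hs hy hsy)]
      _ ≤ _ := by gcongr; exact (le_max_right _ _).trans (le_max_right _ _)
  · have h := (le_abs_self _).trans (hB (s, y) ⟨⟨hs, by linarith⟩, hy, by linarith⟩)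
    calc f s y ≤ B * ((1 + s) ^ γ * (1 + y) ^ α) := (div_le_iff₀ hw).1 h
      _ ≤ _ := by gcongr; exact (le_max_left _ _).trans (le_max_right _ _)

lemma exists_forall_le_max_rpow (hf : HasPowerAsymptotics f ρ α γ)
    (hf_cont : ContinuousOn (fun p : ℝ × ℝ => f p.1 p.2) (Ici 0 ×ˢ Ici 0)) :
    ∃ C > 0, ∀ s y : ℝ, 0 ≤ s → 0 ≤ y → f s y ≤ C * ((max 1 s) ^ γ * (1 + y ^ α)) := by
  obtain ⟨C, hC, hfC⟩ := hf.exists_forall_le hf_cont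
  refine ⟨C * (2 ^ |γ| * 2 ^ |α|), by positivity, fun s y hs hy => ?_⟩
  have hmax : (max 1 y) ^ α ≤ 1 + y ^ α := by
    have hyα : 0 ≤ y ^ α := Real.rpow_nonneg hy α
    rcases max_choice 1 y with h | h <;> rw [h]
    · rw [Real.one_rpow]
      linarith
    · linarith
  have hα := (one_add_rpow_le_mul_max_rpow α hy).trans
    (mul_le_mul_of_nonneg_left hmax (by positivity))
  calc f s y ≤ C * ((1 + s) ^ γ * (1 + y) ^ α) := hfC s y hs hy
    _ ≤ C * ((2 ^ |γ| * (max 1 s) ^ γ) * (2 ^ |α| * (1 + y ^ α))) := by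
        gcongr
        exact one_add_rpow_le_mul_max_rpow γ hs
    _ = C * (2 ^ |γ| * 2 ^ |α|) * ((max 1 s) ^ γ * (1 + y ^ α)) := by ring

end HasPowerAsymptotics

section Primitives

lemma exists_integral_le_integral_add {u v : ℝ → ℝ} {a b : ℝ}
    (hu : ∀ t, a ≤ t → IntervalIntegrable u volume a t)
    (hv : ∀ t, b ≤ t → IntervalIntegrable v volume b t) (huv : ∀ᶠ s in atTop, u s ≤ v s) :
    ∃ K, ∀ᶠ t in atTop, ∫ s in a..t, u s ≤ (∫ s in b..t, v s) + K := by
  obtain ⟨r, hr⟩ := eventually_atTop.1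
    (huv.and ((eventually_ge_atTop a).and (eventually_ge_atTop b)))
  obtain ⟨-, har, hbr⟩ := hr r le_rfl
  refine ⟨(∫ s in a..r, u s) - ∫ s in b..r, v s, ?_⟩
  filter_upwards [eventually_ge_atTop r] with t hrt
  have hur := (hu r har).symm.trans (hu t (har.trans hrt))
  have hvr := (hv r hbr).symm.trans (hv t (hbr.trans hrt))
  have hmono := intervalIntegral.integral_mono_on hrt hur hvr fun s hs => (hr s hs.1).1
  linarith [intervalIntegral.integral_add_adjacent_intervals (hu r har) hur,
    intervalIntegral.integral_add_adjacent_intervals (hv r hbr) hvr]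

lemma monotoneOn_primitive {u : ℝ → ℝ} {a : ℝ} (hu : ContinuousOn u (Ici a))
    (hu_nonneg : ∀ s, a ≤ s → 0 ≤ u s) : MonotoneOn (fun t => ∫ s in a..t, u s) (Ici a) := by
  intro s hs t _ hst
  have hint : ∀ x y, a ≤ x → x ≤ y → IntervalIntegrable u volume x y := fun x y hx hxy =>
    (hu.mono fun _ hz => hx.trans hz.1).intervalIntegrable_of_Icc hxy
  have hadd := intervalIntegral.integral_add_adjacent_intervals (hint a s le_rfl hs)
    (hint s t hs hst)
  have hnonneg : 0 ≤ ∫ x in s..t, u x := intervalIntegral.integral_nonneg hst fun x hx =>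
    hu_nonneg x (le_trans hs hx.1)
  change ∫ x in a..s, u x ≤ ∫ x in a..t, u x
  linarith

lemma continuousOn_primitive_Ici {u : ℝ → ℝ} {a : ℝ} (hu : ContinuousOn u (Ici a)) :
    ContinuousOn (fun t => ∫ s in a..t, u s) (Ici a) := by
  intro t (ht : a ≤ t)
  have hint : IntervalIntegrable u volume a (t + 1) :=
    (hu.mono Icc_subset_Ici_self).intervalIntegrable_of_Icc (by linarith)
  have hcont := intervalIntegral.continuousOn_primitive_interval' hint left_mem_uIcc
  rw [uIcc_of_le (by linarith), ← Ici_inter_Iic] at hcont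
  exact (hcont t ⟨ht, by simp⟩).mono_of_mem_nhdsWithin
    (inter_mem_nhdsWithin _ (Iic_mem_nhds (lt_add_one t)))

lemma integral_one_rpow_sub_one_le {p t : ℝ} (hp : 1 ≤ p) (ht : 1 ≤ t) :
    ∫ s in (1 : ℝ)..t, s ^ (p - 1) ≤ t ^ p := by
  rw [integral_rpow (.inl (by linarith)), sub_add_cancel, Real.one_rpow]
  exact (div_le_self (sub_nonneg.2 (Real.one_le_rpow ht (by linarith))) hp).trans (by simp)

end Primitives

/-- The integrated drift `∫₀ᵗ (2 f(s, y_s) + 1) ds` along a path `y`. -/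
noncomputable def pathDrift (f : ℝ → ℝ → ℝ) (y : ℝ → ℝ) (t : ℝ) : ℝ :=
  ∫ s in (0 : ℝ)..t, (2 * f s (y s) + 1)

/-- The functional `A_t = ∫₁ᵗ s^γ y_s^α ds` of (A_Y) along a path `y`. -/
noncomputable def pathFunctional (γ α : ℝ) (y : ℝ → ℝ) (t : ℝ) : ℝ :=
  ∫ s in (1 : ℝ)..t, s ^ γ * y s ^ α

section Path

variable {f : ℝ → ℝ → ℝ} {y : ℝ → ℝ} {ρ α γ : ℝ}

lemma continuousOn_rpow_mul_rpow (hα : 0 ≤ α) (hy : Continuous y) :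
    ContinuousOn (fun s => s ^ γ * y s ^ α) (Ici 1) :=
  (continuousOn_id.rpow_const fun _ hs => .inl (zero_lt_one.trans_le hs).ne').mul
    (hy.rpow_const fun _ => .inr hα).continuousOn

lemma continuousOn_drift (hf_cont : ContinuousOn (fun p : ℝ × ℝ => f p.1 p.2) (Ici 0 ×ˢ Ici 0))
    (hy : Continuous y) (hy_nonneg : ∀ s, 0 ≤ y s) :
    ContinuousOn (fun s => 2 * f s (y s) + 1) (Ici 0) :=
  ((hf_cont.comp (f := fun s => (s, y s)) (by fun_prop) fun s hs =>
    ⟨hs, hy_nonneg s⟩).const_mul 2).add_const 1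

lemma pathFunctional_nonneg (hy_nonneg : ∀ s, 0 ≤ y s) {t : ℝ} (ht : 1 ≤ t) :
    0 ≤ pathFunctional γ α y t :=
  intervalIntegral.integral_nonneg ht fun s hs =>
    mul_nonneg (Real.rpow_nonneg (zero_le_one.trans hs.1) _) (Real.rpow_nonneg (hy_nonneg s) _)

lemma intervalIntegrable_rpow_mul_rpow (hα : 0 ≤ α) (hy : Continuous y) {t : ℝ} (ht : 1 ≤ t) :
    IntervalIntegrable (fun s => s ^ γ * y s ^ α) volume 1 t :=
  ((continuousOn_rpow_mul_rpow hα hy).mono Icc_subset_Ici_self).intervalIntegrable_of_Icc ht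

lemma intervalIntegrable_drift
    (hf_cont : ContinuousOn (fun p : ℝ × ℝ => f p.1 p.2) (Ici 0 ×ˢ Ici 0))
    (hy : Continuous y) (hy_nonneg : ∀ s, 0 ≤ y s) {a t : ℝ} (ha : 0 ≤ a) (ht : a ≤ t) :
    IntervalIntegrable (fun s => 2 * f s (y s) + 1) volume a t :=
  ((continuousOn_drift hf_cont hy hy_nonneg).mono fun _ hs =>
    ha.trans hs.1).intervalIntegrable_of_Icc ht

lemma intervalIntegrable_one_rpow (q : ℝ) {t : ℝ} (ht : 1 ≤ t) :
    IntervalIntegrable (fun s : ℝ => s ^ q) volume 1 t :=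
  intervalIntegral.intervalIntegrable_rpow (.inr fun h => by
    rw [uIcc_of_le ht] at h
    linarith [h.1])

lemma integral_drift_zero_one_le {C : ℝ}
    (hfC : ∀ s y : ℝ, 0 ≤ s → 0 ≤ y → f s y ≤ C * ((max 1 s) ^ γ * (1 + y ^ α))) (hα : 0 ≤ α)
    (hf_cont : ContinuousOn (fun p : ℝ × ℝ => f p.1 p.2) (Ici 0 ×ˢ Ici 0))
    (hy : Continuous y) (hy_nonneg : ∀ s, 0 ≤ y s) :
    ∫ s in (0 : ℝ)..1, (2 * f s (y s) + 1) ≤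
      2 * C * (∫ s in (0 : ℝ)..1, y s ^ α) + (2 * C + 1) := by
  have hyα : Continuous fun s => y s ^ α := hy.rpow_const fun _ => .inr hα
  calc ∫ s in (0 : ℝ)..1, (2 * f s (y s) + 1)
      ≤ ∫ s in (0 : ℝ)..1, (2 * C * y s ^ α + (2 * C + 1)) := by
        refine intervalIntegral.integral_mono_on zero_le_one
          (intervalIntegrable_drift hf_cont hy hy_nonneg le_rfl zero_le_one)
          (Continuous.intervalIntegrable (by fun_prop) _ _) fun s hs => ?_
        have h := hfC s (y s) hs.1 (hy_nonneg s)
        rw [max_eq_left hs.2, Real.one_rpow] at h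
        linarith
    _ = 2 * C * (∫ s in (0 : ℝ)..1, y s ^ α) + (2 * C + 1) := by
        rw [intervalIntegral.integral_add ((hyα.intervalIntegrable _ _).const_mul _) (by simp),
          intervalIntegral.integral_const_mul]
        simp

lemma integral_drift_one_le {C : ℝ}
    (hfC : ∀ s y : ℝ, 0 ≤ s → 0 ≤ y → f s y ≤ C * ((max 1 s) ^ γ * (1 + y ^ α))) (hC : 0 ≤ C)
    (hα : 0 ≤ α) (hγα : 0 ≤ γ + α)
    (hf_cont : ContinuousOn (fun p : ℝ × ℝ => f p.1 p.2) (Ici 0 ×ˢ Ici 0))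
    (hy : Continuous y) (hy_nonneg : ∀ s, 0 ≤ y s) {t : ℝ} (ht : 1 ≤ t) :
    ∫ s in (1 : ℝ)..t, (2 * f s (y s) + 1) ≤
      2 * C * pathFunctional γ α y t + (2 * C + 1) * t ^ (1 + γ + α) := by
  have hA := (intervalIntegrable_rpow_mul_rpow (γ := γ) hα hy ht).const_mul (2 * C)
  have hpow := (intervalIntegrable_one_rpow (1 + γ + α - 1) ht).const_mul (2 * C + 1)
  calc ∫ s in (1 : ℝ)..t, (2 * f s (y s) + 1)
      ≤ ∫ s in (1 : ℝ)..t,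
          (2 * C * (s ^ γ * y s ^ α) + (2 * C + 1) * s ^ (1 + γ + α - 1)) := by
        refine intervalIntegral.integral_mono_on ht
          (intervalIntegrable_drift hf_cont hy hy_nonneg zero_le_one ht) (hA.add hpow)
          fun s hs => ?_
        have h := hfC s (y s) (zero_le_one.trans hs.1) (hy_nonneg s)
        have hγ : s ^ γ ≤ s ^ (1 + γ + α - 1) :=
          Real.rpow_le_rpow_of_exponent_le hs.1 (by linarith)
        have hone : 1 ≤ s ^ (1 + γ + α - 1) := Real.one_le_rpow hs.1 (by linarith)
        rw [max_eq_right hs.1] at h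
        linarith [mul_le_mul_of_nonneg_left hγ hC]
    _ = 2 * C * pathFunctional γ α y t
          + (2 * C + 1) * ∫ s in (1 : ℝ)..t, s ^ (1 + γ + α - 1) := by
        rw [intervalIntegral.integral_add hA hpow, intervalIntegral.integral_const_mul,
          intervalIntegral.integral_const_mul, pathFunctional]
    _ ≤ 2 * C * pathFunctional γ α y t + (2 * C + 1) * t ^ (1 + γ + α) := by
        gcongr
        exact integral_one_rpow_sub_one_le (by linarith) ht

namespace HasPowerAsymptotics

lemma exists_le_pathDrift (hf : HasPowerAsymptotics f ρ α γ) (hα : 0 ≤ α)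
    (hf_cont : ContinuousOn (fun p : ℝ × ℝ => f p.1 p.2) (Ici 0 ×ˢ Ici 0))
    (hy : Continuous y) (hy_nonneg : ∀ s, 0 ≤ y s) {c : ℝ} (hc : 0 < c) (hcρ : c < ρ) :
    ∃ K, ∀ᶠ t in atTop, 2 * c * pathFunctional γ α y t ≤ pathDrift f y t + K := by
  have hle : ∀ᶠ s in atTop, 2 * c * (s ^ γ * y s ^ α) ≤ 2 * f s (y s) + 1 := by
    filter_upwards [hf.eventually_mul_le hα hc hcρ] with s hs
    linarith [hs (y s) (hy_nonneg s)]
  obtain ⟨K, hK⟩ := exists_integral_le_integral_add (a := 1) (b := 0)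
    (fun t ht => (intervalIntegrable_rpow_mul_rpow hα hy ht).const_mul (2 * c))
    (fun t ht => intervalIntegrable_drift hf_cont hy hy_nonneg le_rfl ht) hle
  refine ⟨K, hK.mono fun t ht => ?_⟩
  rwa [intervalIntegral.integral_const_mul] at ht

lemma eventually_pathDrift_le (hf : HasPowerAsymptotics f ρ α γ) (hρ : 0 ≤ ρ) (hα : 0 ≤ α)
    (hγα : 0 < γ + α)
    (hf_cont : ContinuousOn (fun p : ℝ × ℝ => f p.1 p.2) (Ici 0 ×ˢ Ici 0))
    (hy : Continuous y) (hy_nonneg : ∀ s, 0 ≤ y s) {c : ℝ} (hρc : ρ < c) {ε : ℝ} (hε : 0 < ε) :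
    ∀ᶠ t in atTop,
      pathDrift f y t ≤ 2 * c * pathFunctional γ α y t + ε * t ^ (1 + γ + α) := by
  have hle : ∀ᶠ s in atTop,
      2 * f s (y s) + 1 ≤ 2 * c * (s ^ γ * y s ^ α) + ε / 2 * s ^ (1 + γ + α - 1) := by
    filter_upwards [hf.eventually_le_mul_add hρ hα hρc (by positivity : 0 < ε / 8),
      (isLittleO_const_rpow 1 hγα).bound (by positivity : 0 < ε / 4), eventually_gt_atTop 0]
      with s hs h1 hs0
    rw [norm_one, Real.norm_of_nonneg (by positivity)] at h1
    rw [show 1 + γ + α - 1 = γ + α by ring]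
    linarith [hs (y s) (hy_nonneg s)]
  obtain ⟨K, hK⟩ := exists_integral_le_integral_add (a := 0) (b := 1)
    (fun t ht => intervalIntegrable_drift hf_cont hy hy_nonneg le_rfl ht)
    (fun t ht => ((intervalIntegrable_rpow_mul_rpow hα hy ht).const_mul (2 * c)).add
      ((intervalIntegrable_one_rpow _ ht).const_mul (ε / 2))) hle
  filter_upwards [hK, eventually_ge_atTop 1,
    (isLittleO_const_rpow K (by linarith : 0 < 1 + γ + α)).bound (half_pos hε)] with t ht ht1 hKt
  rw [intervalIntegral.integral_add ((intervalIntegrable_rpow_mul_rpow hα hy ht1).const_mul _)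
    ((intervalIntegrable_one_rpow _ ht1).const_mul _), intervalIntegral.integral_const_mul,
    intervalIntegral.integral_const_mul] at ht
  have hpow := mul_le_mul_of_nonneg_left
    (integral_one_rpow_sub_one_le (by linarith : 1 ≤ 1 + γ + α) ht1) (half_pos hε).le
  rw [Real.norm_of_nonneg (by positivity : 0 ≤ t ^ (1 + γ + α))] at hKt
  unfold pathDrift pathFunctional
  linarith [le_of_abs_le hKt]

lemma isLittleO_pathDrift_sub (hf : HasPowerAsymptotics f ρ α γ) (hρ : 0 < ρ) (hα : 0 ≤ α)
    (hγα : 0 < γ + α)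
    (hf_cont : ContinuousOn (fun p : ℝ × ℝ => f p.1 p.2) (Ici 0 ×ˢ Ici 0))
    (hy : Continuous y) (hy_nonneg : ∀ s, 0 ≤ y s) :
    (fun t => pathDrift f y t - 2 * ρ * pathFunctional γ α y t) =o[atTop]
      fun t => pathFunctional γ α y t + t ^ (1 + γ + α) := by
  refine isLittleO_iff.2 fun ε hε => ?_
  obtain ⟨c, hc, hcρ⟩ := exists_between (max_lt hρ (by linarith : ρ - ε / 2 < ρ))
  obtain ⟨K, hK⟩ := hf.exists_le_pathDrift hα hf_cont hy hy_nonneg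
    ((le_max_left _ _).trans_lt hc) hcρ
  filter_upwards [hK, hf.eventually_pathDrift_le hρ.le hα hγα hf_cont hy hy_nonneg
      (by linarith : ρ < ρ + ε / 2) hε, eventually_ge_atTop 1,
    (isLittleO_const_rpow K (by linarith : 0 < 1 + γ + α)).bound hε] with t hlo hup ht hKt
  have hA : 0 ≤ pathFunctional γ α y t := pathFunctional_nonneg hy_nonneg ht
  have hcA := mul_le_mul_of_nonneg_right ((le_max_right _ _).trans hc.le) hA
  have ht_pos : 0 < t ^ (1 + γ + α) := by positivity
  rw [Real.norm_of_nonneg ht_pos.le] at hKt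
  rw [Real.norm_of_nonneg (add_nonneg hA ht_pos.le), Real.norm_eq_abs, abs_le]
  constructor <;> linarith [le_of_abs_le hKt]

lemma exists_pathDrift_le (hf : HasPowerAsymptotics f ρ α γ) (hα : 0 ≤ α) (hγα : 0 ≤ γ + α)
    (hf_cont : ContinuousOn (fun p : ℝ × ℝ => f p.1 p.2) (Ici 0 ×ˢ Ici 0)) :
    ∃ C > 0, ∀ y : ℝ → ℝ, Continuous y → (∀ s, 0 ≤ y s) → ∀ t, 1 ≤ t →
      pathDrift f y t ≤
        C * ((∫ s in (0 : ℝ)..1, y s ^ α) + pathFunctional γ α y t + t ^ (1 + γ + α)) := by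
  obtain ⟨C, hC, hfC⟩ := hf.exists_forall_le_max_rpow hf_cont
  refine ⟨4 * C + 2, by positivity, fun y hy hy_nonneg t ht => ?_⟩
  have hsplit := intervalIntegral.integral_add_adjacent_intervals
    (intervalIntegrable_drift hf_cont hy hy_nonneg le_rfl zero_le_one)
    (intervalIntegrable_drift hf_cont hy hy_nonneg zero_le_one ht)
  have hcompact := integral_drift_zero_one_le hfC hα hf_cont hy hy_nonneg
  have htail := integral_drift_one_le hfC hC.le hα hγα hf_cont hy hy_nonneg ht
  have hY : 0 ≤ ∫ s in (0 : ℝ)..1, y s ^ α :=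
    intervalIntegral.integral_nonneg zero_le_one fun s _ => Real.rpow_nonneg (hy_nonneg s) α
  have hA : 0 ≤ pathFunctional γ α y t := pathFunctional_nonneg hy_nonneg ht
  have hone : 1 ≤ t ^ (1 + γ + α) := Real.one_le_rpow ht (by linarith)
  unfold pathDrift
  nlinarith only [hsplit, hcompact, htail, mul_nonneg hC.le hY, mul_nonneg hC.le hA, hY, hA, hone,
    mul_le_mul_of_nonneg_left hone hC.le]

end HasPowerAsymptotics

end Path

section IntegralsOfProcesses

variable {Ω : Type*} {m : MeasurableSpace Ω} {μ : Measure Ω}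

lemma stronglyMeasurable_intervalIntegral {E : Type*} [NormedAddCommGroup E] [NormedSpace ℝ E]
    {H : ℝ → Ω → E} (hH : StronglyMeasurable (Function.uncurry H)) (a b : ℝ) :
    StronglyMeasurable fun ω => ∫ s in a..b, H s ω := by
  simp only [intervalIntegral]
  exact hH.integral_prod_left.sub hH.integral_prod_left

lemma integrable_intervalIntegral {E : Type*} [NormedAddCommGroup E] [NormedSpace ℝ E] [SFinite μ]
    {H : ℝ → Ω → E} {a b : ℝ} (hH : StronglyMeasurable (Function.uncurry H))
    (hH_int : ∀ s ∈ Ι a b, Integrable (H s) μ)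
    (hH_norm : IntervalIntegrable (fun s => ∫ ω, ‖H s ω‖ ∂μ) volume a b) :
    Integrable (fun ω => ∫ s in a..b, H s ω) μ := by
  have hprod : Integrable (Function.uncurry H) ((volume.restrict (Ι a b)).prod μ) :=
    (integrable_prod_iff hH.aestronglyMeasurable).2
      ⟨(ae_restrict_mem measurableSet_uIoc).mono hH_int, hH_norm.def'⟩
  simp only [intervalIntegral.intervalIntegral_eq_integral_uIoc]
  exact hprod.integral_prod_right.smul (if a ≤ b then (1 : ℝ) else -1)

end IntegralsOfProcesses

/-- The integrability part of Hypothesis (A_Y), that is (a) and (d), for a nonnegative continuous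
process `Y`; the supremum in (d) is encoded by a bounding constant. -/
structure HasDriftMoments {Ω : Type*} {m : MeasurableSpace Ω} (μ : Measure Ω) (γ α : ℝ)
    (Y : ℝ → Ω → ℝ) : Prop where
  nonneg : ∀ t ω, 0 ≤ Y t ω
  continuous : ∀ ω, Continuous fun t => Y t ω
  measurable : ∀ t, Measurable (Y t)
  integrable_rpow : ∀ t ∈ Icc (0 : ℝ) 1, Integrable (fun ω => Y t ω ^ α) μ
  intervalIntegrable_integral_rpow : IntervalIntegrable (fun t => ∫ ω, Y t ω ^ α ∂μ) volume 0 1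
  exists_integral_le : ∃ C : ℝ, ∀ t : ℝ, 1 ≤ t →
    Integrable (fun ω => pathFunctional γ α (fun s => Y s ω) t) μ ∧
      ∫ ω, pathFunctional γ α (fun s => Y s ω) t ∂μ ≤ C * t ^ (1 + γ + α)

namespace HasDriftMoments

variable {Ω : Type*} {m : MeasurableSpace Ω} {μ : Measure Ω} {f : ℝ → ℝ → ℝ} {ρ α γ : ℝ}
  {Y : ℝ → Ω → ℝ}

lemma measurable_uncurry (hY : HasDriftMoments μ γ α Y) : Measurable (Function.uncurry Y) :=
  measurable_uncurry_of_continuous_of_measurable hY.continuous hY.measurable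

lemma measurable_pathFunctional (hY : HasDriftMoments μ γ α Y) (t : ℝ) :
    Measurable fun ω => pathFunctional γ α (fun s => Y s ω) t :=
  (stronglyMeasurable_intervalIntegral (H := fun s ω => s ^ γ * Y s ω ^ α)
    ((measurable_fst.pow_const γ).mul (hY.measurable_uncurry.pow_const α)).stronglyMeasurable
    1 t).measurable

lemma measurable_pathDrift (hY : HasDriftMoments μ γ α Y)
    (hf_cont : ContinuousOn (fun p : ℝ × ℝ => f p.1 p.2) (Ici 0 ×ˢ Ici 0)) {t : ℝ} (ht : 0 ≤ t) :
    Measurable fun ω => pathDrift f (fun s => Y s ω) t := by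
  have hf_max : Continuous fun p : ℝ × ℝ => f (max p.1 0) (max p.2 0) :=
    continuousOn_univ.1 <| hf_cont.comp (f := fun p : ℝ × ℝ => (max p.1 0, max p.2 0))
      (by fun_prop) fun p _ => mk_mem_prod (le_max_right p.1 0) (le_max_right p.2 0)
  have hH : Measurable (Function.uncurry fun s ω => 2 * f (max s 0) (max (Y s ω) 0) + 1) :=
    ((hf_max.measurable.comp (measurable_fst.prodMk hY.measurable_uncurry)).const_mul 2).add_const 1
  convert (stronglyMeasurable_intervalIntegral hH.stronglyMeasurable 0 t).measurable using 2 with ω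
  refine intervalIntegral.integral_congr fun s hs => ?_
  rw [uIcc_of_le ht] at hs
  simp only [max_eq_left hs.1, max_eq_left (hY.nonneg s ω)]

lemma integrable_integral_rpow [SFinite μ] (hY : HasDriftMoments μ γ α Y) :
    Integrable (fun ω => ∫ s in (0 : ℝ)..1, Y s ω ^ α) μ := by
  refine integrable_intervalIntegral (hY.measurable_uncurry.pow_const α).stronglyMeasurable
    (fun s hs => hY.integrable_rpow s ?_) ?_
  · rw [uIoc_of_le zero_le_one] at hs
    exact Ioc_subset_Icc_self hs
  · simpa only [Real.norm_of_nonneg (Real.rpow_nonneg (hY.nonneg _ _) α)] using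
      hY.intervalIntegrable_integral_rpow

lemma monotoneOn_pathDrift (hY : HasDriftMoments μ γ α Y)
    (hf_cont : ContinuousOn (fun p : ℝ × ℝ => f p.1 p.2) (Ici 0 ×ˢ Ici 0))
    (hf_nonneg : ∀ t y : ℝ, 0 ≤ t → 0 ≤ y → 0 ≤ f t y) (ω : Ω) :
    MonotoneOn (pathDrift f fun s => Y s ω) (Ici 0) :=
  monotoneOn_primitive
    (continuousOn_drift hf_cont (hY.continuous ω) fun s => hY.nonneg s ω) fun s hs => by
      linarith [hf_nonneg s (Y s ω) hs (hY.nonneg s ω)]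

lemma pathDrift_nonneg (hY : HasDriftMoments μ γ α Y)
    (hf_nonneg : ∀ t y : ℝ, 0 ≤ t → 0 ≤ y → 0 ≤ f t y) {t : ℝ} (ht : 0 ≤ t) (ω : Ω) :
    0 ≤ pathDrift f (fun s => Y s ω) t :=
  intervalIntegral.integral_nonneg ht fun s hs => by
    linarith [hf_nonneg s (Y s ω) hs.1 (hY.nonneg s ω)]

lemma integrable_pathDrift [IsFiniteMeasure μ] (hY : HasDriftMoments μ γ α Y)
    (hf : HasPowerAsymptotics f ρ α γ) (hα : 0 ≤ α) (hγα : 0 ≤ γ + α)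
    (hf_cont : ContinuousOn (fun p : ℝ × ℝ => f p.1 p.2) (Ici 0 ×ˢ Ici 0))
    (hf_nonneg : ∀ t y : ℝ, 0 ≤ t → 0 ≤ y → 0 ≤ f t y) {t : ℝ} (ht : 0 ≤ t) :
    Integrable (fun ω => pathDrift f (fun s => Y s ω) t) μ := by
  obtain ⟨C, -, hC⟩ := hf.exists_pathDrift_le hα hγα hf_cont
  obtain ⟨_, hA⟩ := hY.exists_integral_le
  have hbound := ((hY.integrable_integral_rpow.add (hA (max t 1) (le_max_right _ _)).1).add
    (integrable_const (max t 1 ^ (1 + γ + α)))).const_mul C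
  refine hbound.mono' (hY.measurable_pathDrift hf_cont ht).aestronglyMeasurable
    (Eventually.of_forall fun ω => ?_)
  rw [Real.norm_of_nonneg (hY.pathDrift_nonneg hf_nonneg ht ω)]
  exact (hY.monotoneOn_pathDrift hf_cont hf_nonneg ω ht (ht.trans (le_max_left t 1))
    (le_max_left t 1)).trans
      (hC _ (hY.continuous ω) (fun s => hY.nonneg s ω) _ (le_max_right t 1))

lemma exists_integral_pathDrift_le [IsFiniteMeasure μ] (hY : HasDriftMoments μ γ α Y)
    (hf : HasPowerAsymptotics f ρ α γ) (hα : 0 ≤ α) (hγα : 0 ≤ γ + α)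
    (hf_cont : ContinuousOn (fun p : ℝ × ℝ => f p.1 p.2) (Ici 0 ×ˢ Ici 0))
    (hf_nonneg : ∀ t y : ℝ, 0 ≤ t → 0 ≤ y → 0 ≤ f t y) :
    ∃ C : ℝ, ∀ t : ℝ, 1 ≤ t →
      ∫ ω, pathDrift f (fun s => Y s ω) t ∂μ ≤ C * t ^ (1 + γ + α) := by
  obtain ⟨C, hC_pos, hC⟩ := hf.exists_pathDrift_le hα hγα hf_cont
  obtain ⟨CA, hA⟩ := hY.exists_integral_le
  set J := ∫ ω, (∫ s in (0 : ℝ)..1, Y s ω ^ α) ∂μ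
  have hJ : 0 ≤ J := integral_nonneg fun ω =>
    intervalIntegral.integral_nonneg zero_le_one fun s _ => Real.rpow_nonneg (hY.nonneg s ω) α
  refine ⟨C * (J + CA + μ.real univ), fun t ht => ?_⟩
  have hJA := hY.integrable_integral_rpow.add (hA t ht).1
  have hpow : 1 ≤ t ^ (1 + γ + α) := Real.one_le_rpow ht (by linarith)
  calc ∫ ω, pathDrift f (fun s => Y s ω) t ∂μ
      ≤ ∫ ω, C * ((∫ s in (0 : ℝ)..1, Y s ω ^ α) + pathFunctional γ α (fun s => Y s ω) t
          + t ^ (1 + γ + α)) ∂μ :=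
        integral_mono
          (hY.integrable_pathDrift hf hα hγα hf_cont hf_nonneg (zero_le_one.trans ht))
          ((hJA.add (integrable_const _)).const_mul C)
          fun ω => hC _ (hY.continuous ω) (fun s => hY.nonneg s ω) t ht
    _ = C * (J + ∫ ω, pathFunctional γ α (fun s => Y s ω) t ∂μ
          + μ.real univ * t ^ (1 + γ + α)) := by
        rw [integral_const_mul, integral_add (f := fun ω => (∫ s in (0 : ℝ)..1, Y s ω ^ α)
            + pathFunctional γ α (fun s => Y s ω) t) hJA (integrable_const _),
          integral_add hY.integrable_integral_rpow (hA t ht).1, integral_const, smul_eq_mul]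
    _ ≤ C * (J + CA + μ.real univ) * t ^ (1 + γ + α) := by
        rw [mul_assoc, add_mul, add_mul]
        gcongr
        · exact le_mul_of_one_le_right hJ hpow
        · exact (hA t ht).2

end HasDriftMoments

section MaximalInequality

variable {Ω : Type*} {m : MeasurableSpace Ω} {μ : Measure Ω}

lemma measure_le_of_forall_eventually_mem {E : Set Ω} {F : ℕ → Set Ω} {c : ℝ≥0∞}
    (hEF : ∀ ω ∈ E, ∀ᶠ n in atTop, ω ∈ F n) (hF : ∀ n, μ (F n) ≤ c) : μ E ≤ c := by
  have hmono : Monotone fun n => ⋂ k ≥ n, F k := fun _ _ hab =>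
    biInter_subset_biInter_left fun _ hk => le_trans hab hk
  calc μ E ≤ μ (⋃ n, ⋂ k ≥ n, F k) := measure_mono fun ω hω => by
        simpa only [mem_iUnion, mem_iInter] using eventually_atTop.1 (hEF ω hω)
    _ = ⨆ n, μ (⋂ k ≥ n, F k) := hmono.measure_iUnion
    _ ≤ c := iSup_le fun n => (measure_mono (biInter_subset_of_mem le_rfl)).trans (hF n)

lemma measure_exists_le_abs_condExp_le [IsFiniteMeasure μ] (𝒢 : Filtration ℕ m) (Z : Ω → ℝ)
    (n : ℕ) {l : ℝ} (hl : 0 < l) :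
    μ {ω | ∃ k ≤ n, l ≤ |(μ[Z | 𝒢 k]) ω|} ≤ ENNReal.ofReal ((∫ ω, |Z ω| ∂μ) / l) := by
  set U : ℕ → Ω → ℝ := fun k => μ[Z | 𝒢 k]
  have hU : Martingale U 𝒢 μ := martingale_condExp Z 𝒢 μ
  have habs : Submartingale (U ⊔ -U) 𝒢 μ := hU.submartingale.sup hU.neg.submartingale
  set E := {ω | (l.toNNReal : ℝ) ≤
    (Finset.range (n + 1)).sup' Finset.nonempty_range_add_one fun k => (U ⊔ -U) k ω}
  have hmax : l.toNNReal * μ E ≤ ENNReal.ofReal (∫ ω in E, |U n ω| ∂μ) :=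
    maximal_ineq habs (fun k ω => abs_nonneg (U k ω)) n
  have hint : ∫ ω in E, |U n ω| ∂μ ≤ ∫ ω, |Z ω| ∂μ :=
    (setIntegral_le_integral integrable_condExp.abs
      (Eventually.of_forall fun ω => abs_nonneg (U n ω))).trans (integral_abs_condExp_le Z)
  have hsub : {ω | ∃ k ≤ n, l ≤ |U k ω|} ⊆ E := by
    rintro ω ⟨k, hk, hlk⟩
    refine (Real.coe_toNNReal l hl.le).trans_le (hlk.trans ?_)
    exact Finset.le_sup' (fun k => (U ⊔ -U) k ω) (Finset.mem_range.2 (Nat.lt_succ_of_le hk))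
  refine (measure_mono hsub).trans ?_
  rw [ENNReal.ofReal_div_of_pos hl, ENNReal.le_div_iff_mul_le (.inl (by simpa using hl))
    (.inl ENNReal.ofReal_ne_top), mul_comm]
  exact hmax.trans (ENNReal.ofReal_le_ofReal hint)

lemma measure_exists_lt_abs_le [IsFiniteMeasure μ] (ℱ : Filtration ℝ m) {X : ℝ → Ω → ℝ} {t : ℝ}
    (ht : 0 ≤ t) (hX_cont : ∀ ω, ContinuousOn (fun s => X s ω) (Icc 0 t))
    (hX : ∀ s ∈ Icc 0 t, μ[X t | ℱ s] =ᵐ[μ] X s) {l : ℝ} (hl : 0 < l) :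
    μ {ω | ∃ s ∈ Icc 0 t, l < |X s ω|} ≤ ENNReal.ofReal ((∫ ω, |X t ω| ∂μ) / l) := by
  let grid (n k : ℕ) : ℝ := min (k / n) t
  have hgrid_mem (n k) : grid n k ∈ Icc 0 t := ⟨le_min (by positivity) ht, min_le_right _ _⟩
  let 𝒢 (n : ℕ) : Filtration ℕ m :=
    ⟨fun k => ℱ (grid n k), fun i j hij => ℱ.mono (by dsimp only [grid]; gcongr), fun k => ℱ.le _⟩
  refine measure_le_of_forall_eventually_mem
    (F := fun n => {ω | ∃ k ≤ ⌊t * n⌋₊, l ≤ |X (grid n k) ω|}) ?_ fun n => ?_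
  · rintro ω ⟨s, hs, hls⟩
    have hfloor : Tendsto (fun n : ℕ => (⌊s * n⌋₊ : ℝ) / n) atTop (𝓝 s) :=
      (tendsto_nat_floor_mul_div_atTop hs.1).comp tendsto_natCast_atTop_atTop
    have hmin : Tendsto (fun n => grid n ⌊s * n⌋₊) atTop (𝓝 s) := by
      simpa only [min_eq_left hs.2] using hfloor.min (tendsto_const_nhds (x := t))
    have hlim := ((hX_cont ω s hs).tendsto.comp (tendsto_nhdsWithin_iff.2
      ⟨hmin, Eventually.of_forall fun n => hgrid_mem n _⟩)).abs
    filter_upwards [hlim.eventually_const_lt hls] with n hn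
    exact ⟨_, Nat.floor_mono (by have := hs.2; gcongr), hn.le⟩
  · refine (measure_mono_ae ?_).trans
      (measure_exists_le_abs_condExp_le (𝒢 n) (X t) ⌊t * n⌋₊ hl)
    filter_upwards [ae_all_iff.2 fun k => hX (grid n k) (hgrid_mem n k)] with ω hω
    rintro ⟨k, hk, hlk⟩
    exact ⟨k, hk, hlk.trans_eq (congrArg abs (hω k).symm)⟩

lemma integral_abs_le_sqrt_mul [IsFiniteMeasure μ] {Z : Ω → ℝ} (hZ : MemLp Z 2 μ) :
    ∫ ω, |Z ω| ∂μ ≤ √(μ.real univ * ∫ ω, Z ω ^ 2 ∂μ) := by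
  have hholder := integral_mul_le_Lp_mul_Lq_of_nonneg Real.HolderConjugate.two_two
    (Eventually.of_forall fun _ => zero_le_one) (Eventually.of_forall fun ω => abs_nonneg (Z ω))
    (μ := μ) (f := fun _ => 1) (by simpa using memLp_const (1 : ℝ))
    (by simpa only [ENNReal.ofReal_ofNat] using! hZ.abs)
  rw [Real.sqrt_mul measureReal_nonneg]
  simpa [Real.sqrt_eq_rpow] using hholder

lemma ae_isBigO_rpow_of_measure_le {M : ℝ → Ω → ℝ} {c q p : ℝ} (hqp : q < p)
    (hM : ∀ t, 1 ≤ t → ∀ l, 0 < l →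
      μ {ω | ∃ s ∈ Icc 1 t, l < |M s ω|} ≤ ENNReal.ofReal (c * t ^ q / l)) :
    ∀ᵐ ω ∂μ, (fun t => M t ω) =O[atTop] fun t => t ^ p := by
  let E (n : ℕ) : Set Ω := {ω | ∃ s ∈ Icc 1 ((2 : ℝ) ^ n), ((2 : ℝ) ^ n) ^ p < |M s ω|}
  have hE (n : ℕ) : μ (E n) ≤ ENNReal.ofReal (c * ((2 : ℝ) ^ (q - p)) ^ n) := by
    have hpow : (0 : ℝ) < 2 ^ n := by positivity
    refine (hM (2 ^ n) (one_le_pow₀ one_le_two) _ (Real.rpow_pos_of_pos hpow p)).trans_eq ?_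
    rw [mul_div_assoc, ← Real.rpow_sub hpow, Real.rpow_pow_comm zero_le_two]
  have hsum : ∑' n, μ (E n) ≠ ⊤ := by
    have hratio : (2 : ℝ) ^ (q - p) < 1 :=
      Real.rpow_lt_one_of_one_lt_of_neg one_lt_two (sub_neg.2 hqp)
    have hgeom := (summable_geometric_of_lt_one (by positivity) hratio).mul_left c
    exact ne_top_of_le_ne_top hgeom.tsum_ofReal_ne_top (ENNReal.tsum_le_tsum hE)
  filter_upwards [ae_eventually_notMem hsum] with ω hω
  obtain ⟨n₀, hn₀⟩ := eventually_atTop.1 hω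
  refine IsBigO.of_bound (2 ^ |p|) ?_
  filter_upwards [eventually_ge_atTop ((2 : ℝ) ^ n₀)] with t ht
  have ht_one : 1 ≤ t := (one_le_pow₀ one_le_two).trans ht
  have ht_pos : 0 < t := zero_lt_one.trans_le ht_one
  obtain ⟨n, hn_le, hn_lt⟩ := exists_nat_pow_near ht_one (one_lt_two (α := ℝ))
  have hn : n₀ ≤ n + 1 := ((pow_lt_pow_iff_right₀ one_lt_two).1 (ht.trans_lt hn_lt)).le
  have hMt : |M t ω| ≤ ((2 : ℝ) ^ (n + 1)) ^ p :=
    not_lt.1 fun hlt => hn₀ (n + 1) hn ⟨t, ⟨ht_one, hn_lt.le⟩, hlt⟩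
  rw [Real.norm_eq_abs, Real.norm_of_nonneg (Real.rpow_nonneg ht_pos.le p)]
  exact hMt.trans (rpow_le_two_rpow_abs_mul p ht_pos hn_lt.le (by rw [pow_succ]; linarith))

end MaximalInequality

/-- `M` is a locally square-integrable martingale with quadratic variation `Q`: along the localizing
times `τ N`, the stopped processes of `M` and of `M ^ 2 - Q` have the martingale property on
`[0, ∞)`. Only the martingale property is recorded, so `τ N` is not required to be a stopping
time. -/
structure IsLocalSqMartingale {Ω : Type*} {m : MeasurableSpace Ω} (μ : Measure Ω)
    (ℱ : Filtration ℝ m) (τ : ℕ → Ω → ℝ) (M Q : ℝ → Ω → ℝ) : Prop where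
  time_nonneg : ∀ N ω, 0 ≤ τ N ω
  tendsto_time : ∀ ω, Tendsto (fun N => τ N ω) atTop atTop
  integrable_sq : ∀ (N : ℕ) (t : ℝ), 0 ≤ t → Integrable (fun ω => M (min t (τ N ω)) ω ^ 2) μ
  condExp_eq : ∀ (N : ℕ) (s t : ℝ), 0 ≤ s → s ≤ t →
    μ[fun ω => M (min t (τ N ω)) ω | ℱ s] =ᵐ[μ] fun ω => M (min s (τ N ω)) ω
  condExp_sq_sub_eq : ∀ (N : ℕ) (s t : ℝ), 0 ≤ s → s ≤ t →
    μ[fun ω => M (min t (τ N ω)) ω ^ 2 - Q (min t (τ N ω)) ω | ℱ s] =ᵐ[μ]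
      fun ω => M (min s (τ N ω)) ω ^ 2 - Q (min s (τ N ω)) ω

namespace IsLocalSqMartingale

variable {Ω : Type*} {m : MeasurableSpace Ω} {μ : Measure Ω} {ℱ : Filtration ℝ m}
  {τ : ℕ → Ω → ℝ} {M Q : ℝ → Ω → ℝ} {t : ℝ}

lemma integrable_stopped (hM : IsLocalSqMartingale μ ℱ τ M Q) (N : ℕ) (ht : 0 ≤ t) :
    Integrable (fun ω => M (min t (τ N ω)) ω) μ :=
  integrable_condExp.congr (hM.condExp_eq N t t ht le_rfl)

lemma integrable_stopped_sq_sub (hM : IsLocalSqMartingale μ ℱ τ M Q) (N : ℕ) (ht : 0 ≤ t) :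
    Integrable (fun ω => M (min t (τ N ω)) ω ^ 2 - Q (min t (τ N ω)) ω) μ :=
  integrable_condExp.congr (hM.condExp_sq_sub_eq N t t ht le_rfl)

lemma integrable_stopped_variation (hM : IsLocalSqMartingale μ ℱ τ M Q) (N : ℕ) (ht : 0 ≤ t) :
    Integrable (fun ω => Q (min t (τ N ω)) ω) μ :=
  ((hM.integrable_sq N t ht).sub (hM.integrable_stopped_sq_sub N ht)).congr
    (Eventually.of_forall fun ω => by simp)

lemma restrict [IsFiniteMeasure μ] (hM : IsLocalSqMartingale μ ℱ τ M Q) {G : Set Ω}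
    (hG : MeasurableSet[ℱ 0] G) : IsLocalSqMartingale (μ.restrict G) ℱ τ M Q where
  time_nonneg := hM.time_nonneg
  tendsto_time := hM.tendsto_time
  integrable_sq N t ht := (hM.integrable_sq N t ht).restrict
  condExp_eq N s t hs hst :=
    (condExp_restrict_ae_eq_restrict (ℱ.le s) (ℱ.mono hs G hG)
      (hM.integrable_stopped N (hs.trans hst))).trans
      (ae_restrict_of_ae (hM.condExp_eq N s t hs hst))
  condExp_sq_sub_eq N s t hs hst :=
    (condExp_restrict_ae_eq_restrict (ℱ.le s) (ℱ.mono hs G hG)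
      (hM.integrable_stopped_sq_sub N (hs.trans hst))).trans
      (ae_restrict_of_ae (hM.condExp_sq_sub_eq N s t hs hst))

lemma integral_stopped [IsFiniteMeasure μ] (hM : IsLocalSqMartingale μ ℱ τ M Q)
    (hM_zero : ∀ ω, M 0 ω = 0) (N : ℕ) (ht : 0 ≤ t) : ∫ ω, M (min t (τ N ω)) ω ∂μ = 0 := by
  rw [← integral_condExp (ℱ.le 0), integral_congr_ae (hM.condExp_eq N 0 t le_rfl ht)]
  simp only [min_eq_left (hM.time_nonneg N _), hM_zero, integral_zero]

lemma integral_sq_stopped [IsFiniteMeasure μ] (hM : IsLocalSqMartingale μ ℱ τ M Q)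
    (hM_zero : ∀ ω, M 0 ω = 0) (hQ_zero : ∀ ω, Q 0 ω = 0) (N : ℕ) (ht : 0 ≤ t) :
    ∫ ω, M (min t (τ N ω)) ω ^ 2 ∂μ = ∫ ω, Q (min t (τ N ω)) ω ∂μ := by
  rw [← sub_eq_zero, ← integral_sub (hM.integrable_sq N t ht)
    (hM.integrable_stopped_variation N ht), ← integral_condExp (ℱ.le 0),
    integral_congr_ae (hM.condExp_sq_sub_eq N 0 t le_rfl ht)]
  simp [min_eq_left (hM.time_nonneg N _), hM_zero, hQ_zero]

lemma measure_exists_lt_abs_le [IsFiniteMeasure μ] (hM : IsLocalSqMartingale μ ℱ τ M Q)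
    (hM_cont : ∀ ω, ContinuousOn (fun t => M t ω) (Ici 0)) (ht : 0 ≤ t) {c : ℝ}
    (hc : ∀ N, ∫ ω, M (min t (τ N ω)) ω ^ 2 ∂μ ≤ c) {l : ℝ} (hl : 0 < l) :
    μ {ω | ∃ s ∈ Icc 0 t, l < |M s ω|} ≤ ENNReal.ofReal (√(μ.real univ * c) / l) := by
  refine measure_le_of_forall_eventually_mem
    (F := fun N => {ω | ∃ s ∈ Icc 0 t, l < |M (min s (τ N ω)) ω|}) ?_ fun N => ?_
  · rintro ω ⟨s, hs, hls⟩
    filter_upwards [(hM.tendsto_time ω).eventually_ge_atTop s] with N hN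
    exact ⟨s, hs, by rwa [min_eq_left hN]⟩
  · have hcont (ω) : ContinuousOn (fun s => M (min s (τ N ω)) ω) (Icc 0 t) :=
      (hM_cont ω).comp (by fun_prop) fun s hs => le_min hs.1 (hM.time_nonneg N ω)
    have hMemLp : MemLp (fun ω => M (min t (τ N ω)) ω) 2 μ :=
      (memLp_two_iff_integrable_sq (hM.integrable_stopped N ht).aestronglyMeasurable).2
        (hM.integrable_sq N t ht)
    refine (_root_.measure_exists_lt_abs_le ℱ ht hcont
      (fun s hs => hM.condExp_eq N s t hs.1 hs.2) hl).trans (ENNReal.ofReal_le_ofReal ?_)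
    gcongr
    refine (integral_abs_le_sqrt_mul hMemLp).trans ?_
    gcongr
    exact hc N

end IsLocalSqMartingale

/-- A nonnegative process solving `dS = dD + 2 √S dB` for a nondecreasing continuous integrable
drift process `D` started at `0`. The Brownian motion enters only through the stochastic integral
`S - S₀ - D`, a local martingale with quadratic variation `4 ∫₀ᵗ S_u du`. -/
structure IsSqrtDiffusion {Ω : Type*} {m : MeasurableSpace Ω} (μ : Measure Ω)
    (ℱ : Filtration ℝ m) (τ : ℕ → Ω → ℝ) (S D : ℝ → Ω → ℝ) : Prop where
  nonneg : ∀ t ω, 0 ≤ S t ω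
  continuous : ∀ ω, Continuous fun t => S t ω
  adapted : Adapted ℱ S
  drift_zero : ∀ ω, D 0 ω = 0
  drift_monotoneOn : ∀ ω, MonotoneOn (fun t => D t ω) (Ici 0)
  drift_continuousOn : ∀ ω, ContinuousOn (fun t => D t ω) (Ici 0)
  drift_integrable : ∀ t, 0 ≤ t → Integrable (D t) μ
  isLocalSqMartingale : IsLocalSqMartingale μ ℱ τ (fun t ω => S t ω - S 0 ω - D t ω)
    fun t ω => 4 * ∫ u in (0 : ℝ)..t, S u ω

namespace IsSqrtDiffusion

variable {Ω : Type*} {m : MeasurableSpace Ω} {μ : Measure Ω} {ℱ : Filtration ℝ m}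
  {τ : ℕ → Ω → ℝ} {S D : ℝ → Ω → ℝ} {t : ℝ}

lemma restrict [IsFiniteMeasure μ] (hS : IsSqrtDiffusion μ ℱ τ S D) {G : Set Ω}
    (hG : MeasurableSet[ℱ 0] G) : IsSqrtDiffusion (μ.restrict G) ℱ τ S D :=
  { hS with
    drift_integrable := fun t ht => (hS.drift_integrable t ht).restrict
    isLocalSqMartingale := hS.isLocalSqMartingale.restrict hG }

lemma measurable (hS : IsSqrtDiffusion μ ℱ τ S D) (t : ℝ) : Measurable (S t) :=
  (hS.adapted t).mono (ℱ.le t) le_rfl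

lemma drift_nonneg (hS : IsSqrtDiffusion μ ℱ τ S D) (ht : 0 ≤ t) (ω : Ω) : 0 ≤ D t ω :=
  (hS.drift_zero ω).ge.trans (hS.drift_monotoneOn ω self_mem_Ici ht ht)

lemma lintegral_drift_add_stopped_eq [IsFiniteMeasure μ] (hS : IsSqrtDiffusion μ ℱ τ S D)
    (hS_zero : Integrable (S 0) μ) (ht : 0 ≤ t) (N : ℕ) :
    ∫⁻ ω, ENNReal.ofReal (S 0 ω + D t ω +
        (S (min t (τ N ω)) ω - S 0 ω - D (min t (τ N ω)) ω)) ∂μ =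
      ENNReal.ofReal (∫ ω, S 0 ω ∂μ + ∫ ω, D t ω ∂μ) := by
  have hSD := hS_zero.add (hS.drift_integrable t ht)
  have hM := hS.isLocalSqMartingale.integrable_stopped N ht
  have hmean := hS.isLocalSqMartingale.integral_stopped (fun ω => by simp [hS.drift_zero]) N ht
  have hsum : ∫ ω, S 0 ω + D t ω + (S (min t (τ N ω)) ω - S 0 ω - D (min t (τ N ω)) ω) ∂μ =
      ∫ ω, S 0 ω ∂μ + ∫ ω, D t ω ∂μ := by
    rw [integral_add (f := fun ω => S 0 ω + D t ω) hSD hM, hmean, add_zero,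
      integral_add hS_zero (hS.drift_integrable t ht)]
  rw [← hsum]
  refine (ofReal_integral_eq_lintegral_ofReal (hSD.add hM) (Eventually.of_forall fun ω => ?_)).symm
  have hD := hS.drift_monotoneOn ω (le_min ht (hS.isLocalSqMartingale.time_nonneg N ω)) ht
    (min_le_left t (τ N ω))
  change 0 ≤ S 0 ω + D t ω + (S (min t (τ N ω)) ω - S 0 ω - D (min t (τ N ω)) ω)
  linarith [hS.nonneg (min t (τ N ω)) ω]

lemma lintegral_le [IsFiniteMeasure μ] (hS : IsSqrtDiffusion μ ℱ τ S D)
    (hS_zero : Integrable (S 0) μ) (ht : 0 ≤ t) :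
    ∫⁻ ω, ENNReal.ofReal (S t ω) ∂μ ≤ ENNReal.ofReal (∫ ω, S 0 ω ∂μ + ∫ ω, D t ω ∂μ) := by
  let W (N : ℕ) (ω : Ω) : ℝ≥0∞ :=
    ENNReal.ofReal (S 0 ω + D t ω + (S (min t (τ N ω)) ω - S 0 ω - D (min t (τ N ω)) ω))
  have hW_meas (N) : AEMeasurable (W N) μ :=
    ((hS_zero.add (hS.drift_integrable t ht)).add
      (hS.isLocalSqMartingale.integrable_stopped N ht)).aemeasurable.ennreal_ofReal
  have hW_lim (ω) : liminf (fun N => W N ω) atTop = ENNReal.ofReal (S t ω) := by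
    refine (tendsto_const_nhds.congr' ?_).liminf_eq
    filter_upwards [(hS.isLocalSqMartingale.tendsto_time ω).eventually_ge_atTop t] with N hN
    simp only [W, min_eq_left hN]
    ring_nf
  calc ∫⁻ ω, ENNReal.ofReal (S t ω) ∂μ = ∫⁻ ω, liminf (fun N => W N ω) atTop ∂μ := by
        simp only [hW_lim]
    _ ≤ liminf (fun N => ∫⁻ ω, W N ω ∂μ) atTop := lintegral_liminf_le' hW_meas
    _ = ENNReal.ofReal (∫ ω, S 0 ω ∂μ + ∫ ω, D t ω ∂μ) := by
        simp only [W, hS.lintegral_drift_add_stopped_eq hS_zero ht, liminf_const]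

lemma ofReal_integral_stopped_le (hS : IsSqrtDiffusion μ ℱ τ S D) (ht : 0 ≤ t) (N : ℕ) (ω : Ω) :
    ENNReal.ofReal (∫ u in (0 : ℝ)..min t (τ N ω), S u ω) ≤
      ∫⁻ u in Ioc 0 t, ENNReal.ofReal (S u ω) := by
  have hint := (hS.continuous ω).intervalIntegrable (μ := volume) 0 t
  have hnonneg : ∀ u, 0 ≤ S u ω := fun u => hS.nonneg u ω
  rw [← ofReal_integral_eq_lintegral_ofReal hint.1 (Eventually.of_forall hnonneg),
    ← intervalIntegral.integral_of_le ht]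
  exact ENNReal.ofReal_le_ofReal <| intervalIntegral.integral_mono_interval le_rfl
    (le_min ht (hS.isLocalSqMartingale.time_nonneg N ω)) (min_le_left _ _)
    (Eventually.of_forall hnonneg) hint

lemma integral_integral_stopped_le [IsFiniteMeasure μ] (hS : IsSqrtDiffusion μ ℱ τ S D)
    (hS_zero : Integrable (S 0) μ) (ht : 0 ≤ t) (N : ℕ) :
    ∫ ω, 4 * (∫ u in (0 : ℝ)..min t (τ N ω), S u ω) ∂μ ≤
      4 * (t * (∫ ω, S 0 ω ∂μ + ∫ ω, D t ω ∂μ)) := by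
  have hQ := hS.isLocalSqMartingale.integrable_stopped_variation N ht
  have hQ_int : Integrable (fun ω => ∫ u in (0 : ℝ)..min t (τ N ω), S u ω) μ := by
    simpa using hQ.const_mul 4⁻¹
  have hQ_nonneg (ω) : 0 ≤ ∫ u in (0 : ℝ)..min t (τ N ω), S u ω :=
    intervalIntegral.integral_nonneg (le_min ht (hS.isLocalSqMartingale.time_nonneg N ω))
      fun u _ => hS.nonneg u ω
  have hbound : 0 ≤ ∫ ω, S 0 ω ∂μ + ∫ ω, D t ω ∂μ :=
    add_nonneg (integral_nonneg (hS.nonneg 0)) (integral_nonneg (hS.drift_nonneg ht))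
  have hS_uncurry : Measurable (Function.uncurry S) :=
    measurable_uncurry_of_continuous_of_measurable hS.continuous hS.measurable
  rw [integral_const_mul]
  refine mul_le_mul_of_nonneg_left ?_ zero_le_four
  rw [← ENNReal.ofReal_le_ofReal_iff (mul_nonneg ht hbound),
    ofReal_integral_eq_lintegral_ofReal hQ_int (Eventually.of_forall hQ_nonneg)]
  calc ∫⁻ ω, ENNReal.ofReal (∫ u in (0 : ℝ)..min t (τ N ω), S u ω) ∂μ
      ≤ ∫⁻ ω, (∫⁻ u in Ioc 0 t, ENNReal.ofReal (S u ω)) ∂μ :=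
        lintegral_mono fun ω => hS.ofReal_integral_stopped_le ht N ω
    _ = ∫⁻ u in Ioc 0 t, (∫⁻ ω, ENNReal.ofReal (S u ω) ∂μ) :=
        lintegral_lintegral_swap (hS_uncurry.comp measurable_swap).ennreal_ofReal.aemeasurable
    _ ≤ ∫⁻ _ in Ioc 0 t, ENNReal.ofReal (∫ ω, S 0 ω ∂μ + ∫ ω, D t ω ∂μ) := by
        refine setLIntegral_mono' measurableSet_Ioc fun u hu =>
          (hS.lintegral_le hS_zero hu.1.le).trans (ENNReal.ofReal_le_ofReal ?_)
        exact add_le_add le_rfl <| integral_mono (hS.drift_integrable u hu.1.le)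
          (hS.drift_integrable t ht) fun ω => hS.drift_monotoneOn ω hu.1.le ht hu.2
    _ = ENNReal.ofReal (t * (∫ ω, S 0 ω ∂μ + ∫ ω, D t ω ∂μ)) := by
        rw [setLIntegral_const, Real.volume_Ioc, sub_zero, mul_comm, ENNReal.ofReal_mul ht]

lemma measure_exists_lt_abs_le [IsFiniteMeasure μ] (hS : IsSqrtDiffusion μ ℱ τ S D)
    (hS_zero : Integrable (S 0) μ) (ht : 0 ≤ t) {l : ℝ} (hl : 0 < l) :
    μ {ω | ∃ s ∈ Icc 0 t, l < |S s ω - S 0 ω - D s ω|} ≤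
      ENNReal.ofReal (√(μ.real univ * (4 * (t * (∫ ω, S 0 ω ∂μ + ∫ ω, D t ω ∂μ)))) / l) := by
  refine hS.isLocalSqMartingale.measure_exists_lt_abs_le (fun ω => ?_) ht (fun N => ?_) hl
  · exact ((hS.continuous ω).continuousOn.sub continuousOn_const).sub (hS.drift_continuousOn ω)
  · rw [hS.isLocalSqMartingale.integral_sq_stopped (fun ω => by simp [hS.drift_zero])
      (fun ω => by simp) N ht]
    exact hS.integral_integral_stopped_le hS_zero ht N

lemma ae_isBigO_of_integrable [IsFiniteMeasure μ] (hS : IsSqrtDiffusion μ ℱ τ S D)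
    (hS_zero : Integrable (S 0) μ) {C p q : ℝ} (hp : 0 ≤ p) (hpq : (p + 1) / 2 < q)
    (hD : ∀ t, 1 ≤ t → ∫ ω, D t ω ∂μ ≤ C * t ^ p) :
    ∀ᵐ ω ∂μ, (fun t => S t ω - S 0 ω - D t ω) =O[atTop] fun t => t ^ q := by
  set B := μ.real univ * (4 * (∫ ω, S 0 ω ∂μ + C))
  refine ae_isBigO_rpow_of_measure_le (c := √B) hpq fun t ht l hl => ?_
  have ht_pos : 0 < t := zero_lt_one.trans_le ht
  have hmoment : μ.real univ * (4 * (t * (∫ ω, S 0 ω ∂μ + ∫ ω, D t ω ∂μ))) ≤ B * t ^ (p + 1) := by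
    have hS_mean : 0 ≤ ∫ ω, S 0 ω ∂μ := integral_nonneg (hS.nonneg 0)
    have hsum : ∫ ω, S 0 ω ∂μ + ∫ ω, D t ω ∂μ ≤ (∫ ω, S 0 ω ∂μ + C) * t ^ p := by
      rw [add_mul]
      exact add_le_add (le_mul_of_one_le_right hS_mean (Real.one_le_rpow ht hp)) (hD t ht)
    calc μ.real univ * (4 * (t * (∫ ω, S 0 ω ∂μ + ∫ ω, D t ω ∂μ)))
        ≤ μ.real univ * (4 * (t * ((∫ ω, S 0 ω ∂μ + C) * t ^ p))) := by gcongr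
      _ = B * t ^ (p + 1) := by rw [Real.rpow_add_one ht_pos.ne']; ring
  calc μ {ω | ∃ s ∈ Icc 1 t, l < |S s ω - S 0 ω - D s ω|}
      ≤ μ {ω | ∃ s ∈ Icc 0 t, l < |S s ω - S 0 ω - D s ω|} :=
        measure_mono fun ω ⟨s, hs, hls⟩ => ⟨s, Icc_subset_Icc_left zero_le_one hs, hls⟩
    _ ≤ ENNReal.ofReal (√(B * t ^ (p + 1)) / l) :=
        (hS.measure_exists_lt_abs_le hS_zero ht_pos.le hl).trans
          (ENNReal.ofReal_le_ofReal (by gcongr))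
    _ = ENNReal.ofReal (√B * t ^ ((p + 1) / 2) / l) := by
        rw [Real.sqrt_mul' _ (by positivity), sqrt_rpow_eq_rpow_half ht_pos.le]

-- `S 0` need not be integrable, so argue on the events `{S 0 ≤ K}`, which lie in `ℱ 0`.
lemma ae_isBigO [IsFiniteMeasure μ] (hS : IsSqrtDiffusion μ ℱ τ S D) {C p q : ℝ} (hp : 0 ≤ p)
    (hpq : (p + 1) / 2 < q) (hD : ∀ t, 1 ≤ t → ∫ ω, D t ω ∂μ ≤ C * t ^ p) :
    ∀ᵐ ω ∂μ, (fun t => S t ω - S 0 ω - D t ω) =O[atTop] fun t => t ^ q := by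
  let G (K : ℕ) : Set Ω := {ω | S 0 ω ≤ K}
  have hG (K) : MeasurableSet[ℱ 0] (G K) := hS.adapted 0 measurableSet_Iic
  have hG_univ : ⋃ K, G K = univ := iUnion_eq_univ_iff.2 fun ω => exists_nat_ge (S 0 ω)
  rw [← Measure.restrict_univ (μ := μ), ← hG_univ, ae_restrict_iUnion_iff]
  intro K
  refine (hS.restrict (hG K)).ae_isBigO_of_integrable (C := C) ?_ hp hpq fun t ht => ?_
  · refine Measure.integrableOn_of_bounded (M := K) (measure_ne_top μ _)
      (hS.measurable 0).aestronglyMeasurable ?_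
    filter_upwards [ae_restrict_mem (ℱ.le 0 _ (hG K))] with ω hω
    rwa [Real.norm_of_nonneg (hS.nonneg 0 ω)]
  · have ht_nonneg : 0 ≤ t := zero_le_one.trans ht
    exact (setIntegral_le_integral (hS.drift_integrable t ht_nonneg)
      (Eventually.of_forall (hS.drift_nonneg ht_nonneg))).trans (hD t ht)

end IsSqrtDiffusion

lemma HasDriftMoments.ae_isBigO_pathFunctional {Ω : Type*} {m : MeasurableSpace Ω} {μ : Measure Ω}
    [IsFiniteMeasure μ] {γ α : ℝ} {Y : ℝ → Ω → ℝ} (hY : HasDriftMoments μ γ α Y) (hα : 0 ≤ α)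
    {q : ℝ} (hq : 1 + γ + α < q) :
    ∀ᵐ ω ∂μ, (fun t => pathFunctional γ α (fun s => Y s ω) t) =O[atTop] fun t => t ^ q := by
  obtain ⟨C, hC⟩ := hY.exists_integral_le
  refine ae_isBigO_rpow_of_measure_le (c := C) hq fun t ht l hl => ?_
  have hnonneg {s} (hs : 1 ≤ s) (ω) : 0 ≤ pathFunctional γ α (fun s => Y s ω) s :=
    pathFunctional_nonneg (fun s => hY.nonneg s ω) hs
  have hmono (ω) : MonotoneOn (pathFunctional γ α fun s => Y s ω) (Ici 1) :=
    monotoneOn_primitive (continuousOn_rpow_mul_rpow hα (hY.continuous ω)) fun s hs =>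
      mul_nonneg (Real.rpow_nonneg (zero_le_one.trans hs) _) (Real.rpow_nonneg (hY.nonneg s ω) _)
  have hmarkov := mul_meas_ge_le_integral_of_nonneg (Eventually.of_forall (hnonneg ht))
    (hC t ht).1 l
  refine (measure_mono (t := {ω | l ≤ pathFunctional γ α (fun s => Y s ω) t}) ?_).trans ?_
  · rintro ω ⟨s, hs, hls⟩
    rw [abs_of_nonneg (hnonneg hs.1 ω)] at hls
    exact hls.le.trans (hmono ω hs.1 ht hs.2)
  · rw [← ofReal_measureReal]
    refine ENNReal.ofReal_le_ofReal ((le_div_iff₀' hl).2 (hmarkov.trans (hC t ht).2))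

section ConvergenceInDistribution

variable {ι Ω Ω' : Type*} {m : MeasurableSpace Ω} {m' : MeasurableSpace Ω'} {μ : Measure Ω}
  {μ' : Measure Ω'} {l : Filter ι} {X : ι → Ω → ℝ} {Z : Ω' → ℝ}

-- If `Z` were not measurable, the Bochner integrals of both `arctan Z` and `arctan Z + 1` would
-- take the junk value `0`, although the limits of the left-hand sides differ by `1`.
lemma aemeasurable_of_forall_tendsto_integral [IsProbabilityMeasure μ] [l.NeBot]
    (hX : ∀ i, AEMeasurable (X i) μ)
    (h : ∀ g : ℝ →ᵇ ℝ, Tendsto (fun i => ∫ ω, g (X i ω) ∂μ) l (𝓝 (∫ ω, g (Z ω) ∂μ'))) :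
    AEMeasurable Z μ' := by
  by_contra hZ
  let arctan : ℝ →ᵇ ℝ := .ofNormedAddCommGroup Real.arctan Real.continuous_arctan (Real.pi / 2)
    fun x => abs_le.2 ⟨(Real.neg_pi_div_two_lt_arctan x).le, (Real.arctan_lt_pi_div_two x).le⟩
  let g (c : ℝ) : ℝ →ᵇ ℝ := arctan + .const ℝ c
  have hemb (c : ℝ) : MeasurableEmbedding (g c) :=
    (g c).continuous.measurableEmbedding fun x y hxy =>
      Real.arctan_injective (add_right_cancel hxy)
  have hzero (c : ℝ) : ∫ ω, g c (Z ω) ∂μ' = 0 :=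
    integral_undef fun hint => hZ ((hemb c).aemeasurable_comp_iff.1 hint.aemeasurable)
  have hshift (i) : ∫ ω, g 1 (X i ω) ∂μ = ∫ ω, g 0 (X i ω) ∂μ + 1 := by
    have hint : Integrable (fun ω => g 0 (X i ω)) μ :=
      .of_bound ((g 0).continuous.measurable.comp_aemeasurable (hX i)).aestronglyMeasurable
        ‖g 0‖ (Eventually.of_forall fun ω => (g 0).norm_coe_le_norm _)
    simpa [g, add_assoc] using integral_add hint (integrable_const 1)
  have h0 := (h (g 0)).add_const 1
  simp only [← hshift, hzero] at h0
  have h1 := h (g 1)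
  rw [hzero] at h1
  exact zero_ne_one ((tendsto_nhds_unique h1 h0).trans (zero_add 1))

lemma tendstoInDistribution_iff_forall_tendsto_integral [IsProbabilityMeasure μ]
    [IsProbabilityMeasure μ'] [l.NeBot] (hX : ∀ i, AEMeasurable (X i) μ) :
    TendstoInDistribution X l Z (fun _ => μ) μ' ↔
      ∀ g : ℝ →ᵇ ℝ, Tendsto (fun i => ∫ ω, g (X i ω) ∂μ) l (𝓝 (∫ ω, g (Z ω) ∂μ')) := by
  have hmap (g : ℝ →ᵇ ℝ) (i : ι) : ∫ x, g x ∂(μ.map (X i)) = ∫ ω, g (X i ω) ∂μ :=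
    integral_map (hX i) g.continuous.aestronglyMeasurable
  have hmap' (hZ : AEMeasurable Z μ') (g : ℝ →ᵇ ℝ) : ∫ x, g x ∂(μ'.map Z) = ∫ ω, g (Z ω) ∂μ' :=
    integral_map hZ g.continuous.aestronglyMeasurable
  constructor
  · intro h g
    simpa only [ProbabilityMeasure.coe_mk, hmap, hmap' h.aemeasurable_limit] using
      ProbabilityMeasure.tendsto_iff_forall_integral_tendsto.1 h.tendsto g
  · intro h
    have hZ := aemeasurable_of_forall_tendsto_integral hX h
    refine ⟨hX, hZ, ProbabilityMeasure.tendsto_iff_forall_integral_tendsto.2 fun g => ?_⟩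
    simpa only [ProbabilityMeasure.coe_mk, hmap, hmap' hZ] using h g

lemma tendstoInMeasure_of_ae_tendsto [IsFiniteMeasure μ] [l.IsCountablyGenerated] {Z : Ω → ℝ}
    (hX : ∀ i, AEStronglyMeasurable (X i) μ)
    (h : ∀ᵐ ω ∂μ, Tendsto (fun i => X i ω) l (𝓝 (Z ω))) : TendstoInMeasure μ X l Z :=
  fun ε hε => tendsto_of_seq_tendsto fun u hu =>
    tendstoInMeasure_of_tendsto_ae (fun n => hX (u n)) (h.mono fun _ hω => hω.comp hu) ε hε

-- The error may be relative to `A + b` rather than to `b` because the convergent family `A / b` is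
-- tight.
lemma tendstoInDistribution_div_of_ae_isLittleO [IsProbabilityMeasure μ] [IsProbabilityMeasure μ']
    [l.NeBot] [l.IsCountablyGenerated] {A : ι → Ω → ℝ} {b : ι → ℝ} {c : ℝ}
    (hX : ∀ i, Measurable (X i)) (hA : ∀ i, Measurable (A i))
    (hb : ∀ᶠ i in l, 0 < b i) (hA_nonneg : ∀ᶠ i in l, ∀ ω, 0 ≤ A i ω)
    (hAZ : TendstoInDistribution (fun i ω => A i ω / b i) l Z (fun _ => μ) μ')
    (hXA : ∀ᵐ ω ∂μ, (fun i => X i ω - c * A i ω) =o[l] fun i => A i ω + b i) :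
    TendstoInDistribution (fun i ω => X i ω / b i) l (fun ω => c * Z ω) (fun _ => μ) μ' := by
  let V (i : ι) (ω : Ω) : ℝ := (X i ω - c * A i ω) / (A i ω + b i)
  have hV (i) : Measurable (V i) :=
    ((hX i).sub ((hA i).const_mul c)).div ((hA i).add_const (b i))
  have hV_lim : TendstoInMeasure μ V l fun _ => 0 :=
    tendstoInMeasure_of_ae_tendsto (fun i => (hV i).aestronglyMeasurable)
      (hXA.mono fun ω hω => hω.tendsto_div_nhds_zero)
  let G (z : ℝ × ℝ) : ℝ := c * z.1 + z.2 * (z.1 + 1)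
  have hslutsky := hAZ.continuous_comp_prodMk_of_tendstoInMeasure_const
    (g := G) (by fun_prop) hV_lim fun i => (hV i).aemeasurable
  rw [tendstoInDistribution_iff_forall_tendsto_integral hslutsky.forall_aemeasurable] at hslutsky
  rw [tendstoInDistribution_iff_forall_tendsto_integral fun i => ((hX i).div_const _).aemeasurable]
  intro g
  have hg := hslutsky g
  simp only [G, zero_mul, add_zero] at hg
  refine hg.congr' ?_
  filter_upwards [hb, hA_nonneg] with i hbi hAi
  refine integral_congr_ae (Eventually.of_forall fun ω => congrArg g ?_)
  have hAb : A i ω + b i ≠ 0 := (add_pos_of_nonneg_of_pos (hAi ω) hbi).ne'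
  simp only [V]
  field_simp
  ring

end ConvergenceInDistribution

section Logarithm

lemma tendsto_log_div_log_of_isBigO {u : ℝ → ℝ} {p : ℝ}
    (hlower : ∀ e > 0, (fun t => t ^ (p - e)) =O[atTop] u)
    (hupper : ∀ e > 0, u =O[atTop] fun t => t ^ (p + e)) :
    Tendsto (fun t => Real.log (u t) / Real.log t) atTop (𝓝 p) := by
  refine Metric.tendsto_nhds.2 fun ε hε => ?_
  have hlo := ((isLittleO_rpow_rpow_of_lt (by linarith : p - ε / 2 < p - ε / 4)).trans_isBigO
    (hlower _ (by positivity))).bound one_pos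
  have hup := ((hupper (ε / 4) (by positivity)).trans_isLittleO
    (isLittleO_rpow_rpow_of_lt (by linarith : p + ε / 4 < p + ε / 2))).bound one_pos
  filter_upwards [hlo, hup, eventually_gt_atTop 1] with t hlo hup ht
  have ht_pos : 0 < t := zero_lt_one.trans ht
  have hlog : 0 < Real.log t := Real.log_pos ht
  have hpow (q : ℝ) : ‖t ^ q‖ = t ^ q := Real.norm_of_nonneg (by positivity)
  rw [one_mul, hpow, Real.norm_eq_abs] at hlo hup
  have hu : 0 < |u t| := (Real.rpow_pos_of_pos ht_pos _).trans_le hlo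
  have hlog_lo := Real.log_le_log (Real.rpow_pos_of_pos ht_pos _) hlo
  have hlog_up := Real.log_le_log hu hup
  rw [Real.log_rpow ht_pos, Real.log_abs, ← le_div_iff₀ hlog] at hlog_lo
  rw [Real.log_rpow ht_pos, Real.log_abs, ← div_le_iff₀ hlog] at hlog_up
  rw [Real.dist_eq, abs_lt]
  constructor <;> linarith

lemma isBigO_rpow_sub_of_tendsto_atTop {u : ℝ → ℝ} {p e : ℝ}
    (hu : Tendsto (fun t => t ^ e * u t / t ^ p) atTop atTop) :
    (fun t => t ^ (p - e)) =O[atTop] u := by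
  refine IsBigO.of_bound 1 ?_
  filter_upwards [hu.eventually_ge_atTop 1, eventually_gt_atTop 0] with t hut ht
  rw [Real.norm_of_nonneg (by positivity), one_mul, Real.rpow_sub ht,
    div_le_iff₀ (by positivity), mul_comm]
  refine ((one_le_div (by positivity)).1 hut).trans ?_
  gcongr
  exact le_abs_self _

lemma ae_forall_pos_of_forall_pos_ae {Ω : Type*} {m : MeasurableSpace Ω} {μ : Measure Ω}
    {P : ℝ → Ω → Prop} (hmono : ∀ ω a b, a ≤ b → P a ω → P b ω) (hP : ∀ e > 0, ∀ᵐ ω ∂μ, P e ω) :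
    ∀ᵐ ω ∂μ, ∀ e > 0, P e ω := by
  filter_upwards [ae_all_iff.2 fun n : ℕ => hP (1 / (n + 1)) Nat.one_div_pos_of_nat] with ω hω e he
  obtain ⟨n, hn⟩ := exists_nat_one_div_lt he
  exact hmono ω _ _ hn.le (hω n)

end Logarithm

section AsymptoticsAlongPath

variable {f : ℝ → ℝ → ℝ} {y s : ℝ → ℝ} {ρ α γ : ℝ}

namespace HasPowerAsymptotics

lemma isBigO_pathFunctional_pathDrift (hf : HasPowerAsymptotics f ρ α γ) (hρ : 0 < ρ) (hα : 0 ≤ α)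
    (hf_cont : ContinuousOn (fun p : ℝ × ℝ => f p.1 p.2) (Ici 0 ×ˢ Ici 0))
    (hy : Continuous y) (hy_nonneg : ∀ s, 0 ≤ y s)
    (hA : (fun _ => (1 : ℝ)) =o[atTop] pathFunctional γ α y) :
    pathFunctional γ α y =O[atTop] pathDrift f y := by
  obtain ⟨K, hK⟩ := hf.exists_le_pathDrift hα hf_cont hy hy_nonneg (half_pos hρ) (half_lt_self hρ)
  have hKA : (fun _ => K) =o[atTop] pathFunctional γ α y := by
    simpa using hA.const_mul_left K
  refine IsBigO.of_bound (2 / ρ) ?_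
  filter_upwards [hK, hKA.bound (half_pos hρ), eventually_ge_atTop 1] with t ht hKt ht1
  have hA_nonneg := pathFunctional_nonneg (γ := γ) (α := α) hy_nonneg ht1
  rw [Real.norm_of_nonneg hA_nonneg] at hKt ⊢
  rw [div_mul_eq_mul_div, le_div_iff₀ hρ]
  linarith [le_of_abs_le hKt, Real.le_norm_self (pathDrift f y t)]

lemma isBigO_pathFunctional_of_isBigO_sub_pathDrift (hf : HasPowerAsymptotics f ρ α γ)
    (hρ : 0 < ρ) (hα : 0 ≤ α)
    (hf_cont : ContinuousOn (fun p : ℝ × ℝ => f p.1 p.2) (Ici 0 ×ˢ Ici 0))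
    (hy : Continuous y) (hy_nonneg : ∀ s, 0 ≤ y s) {q r : ℝ} (hr : 0 < r) (hqr : q < r)
    (hA : (fun t => t ^ r) =O[atTop] pathFunctional γ α y)
    (hs : (fun t => s t - pathDrift f y t) =O[atTop] fun t => t ^ q) :
    pathFunctional γ α y =O[atTop] s := by
  have hAD := hf.isBigO_pathFunctional_pathDrift hρ hα hf_cont hy hy_nonneg
    ((isLittleO_const_rpow 1 hr).trans_isBigO hA)
  have hsD : s ~[atTop] pathDrift f y :=
    (hs.trans_isLittleO (isLittleO_rpow_rpow_of_lt hqr)).trans_isBigO (hA.trans hAD)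
  exact hAD.trans hsD.isBigO_symm

lemma isLittleO_sub_pathFunctional (hf : HasPowerAsymptotics f ρ α γ) (hρ : 0 < ρ) (hα : 0 ≤ α)
    (hγα : 0 < γ + α) (hf_cont : ContinuousOn (fun p : ℝ × ℝ => f p.1 p.2) (Ici 0 ×ˢ Ici 0))
    (hy : Continuous y) (hy_nonneg : ∀ s, 0 ≤ y s) {q : ℝ} (hq : q < 1 + γ + α)
    (hs : (fun t => s t - pathDrift f y t) =O[atTop] fun t => t ^ q) :
    (fun t => s t - 2 * ρ * pathFunctional γ α y t) =o[atTop]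
      fun t => pathFunctional γ α y t + t ^ (1 + γ + α) := by
  have hle : (fun t => t ^ (1 + γ + α)) =O[atTop]
      fun t => pathFunctional γ α y t + t ^ (1 + γ + α) := by
    refine IsBigO.of_bound' ?_
    filter_upwards [eventually_ge_atTop 1] with t ht
    have hpow : 0 ≤ t ^ (1 + γ + α) := by positivity
    have hA : 0 ≤ pathFunctional γ α y t := pathFunctional_nonneg hy_nonneg ht
    rw [Real.norm_of_nonneg hpow, Real.norm_of_nonneg (add_nonneg hA hpow)]
    exact le_add_of_nonneg_left hA
  have hsD := (hs.trans_isLittleO (isLittleO_rpow_rpow_of_lt hq)).trans_isBigO hle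
  refine (hsD.add (hf.isLittleO_pathDrift_sub hρ hα hγα hf_cont hy hy_nonneg)).congr_left ?_
  intro t
  ring

end HasPowerAsymptotics

end AsymptoticsAlongPath

section Superdiffusivity

variable {Ω : Type*} {m : MeasurableSpace Ω} {μ : Measure Ω} {ℱ : Filtration ℝ m}
  {τ : ℕ → Ω → ℝ} {f : ℝ → ℝ → ℝ} {ρ α γ : ℝ} {Y S : ℝ → Ω → ℝ}

lemma HasDriftMoments.isSqrtDiffusion [IsFiniteMeasure μ] (hY : HasDriftMoments μ γ α Y)
    (hf : HasPowerAsymptotics f ρ α γ) (hα : 0 ≤ α) (hγα : 0 ≤ γ + α)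
    (hf_cont : ContinuousOn (fun p : ℝ × ℝ => f p.1 p.2) (Ici 0 ×ˢ Ici 0))
    (hf_nonneg : ∀ t y : ℝ, 0 ≤ t → 0 ≤ y → 0 ≤ f t y)
    (hS_nonneg : ∀ t ω, 0 ≤ S t ω) (hS_cont : ∀ ω, Continuous fun t => S t ω)
    (hS_adapted : Adapted ℱ S)
    (hM : IsLocalSqMartingale μ ℱ τ (driftM f Y S) fun t ω => 4 * ∫ u in (0 : ℝ)..t, S u ω) :
    IsSqrtDiffusion μ ℱ τ S fun t ω => pathDrift f (fun s => Y s ω) t where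
  nonneg := hS_nonneg
  continuous := hS_cont
  adapted := hS_adapted
  drift_zero _ := intervalIntegral.integral_same
  drift_monotoneOn := hY.monotoneOn_pathDrift hf_cont hf_nonneg
  drift_continuousOn ω := continuousOn_primitive_Ici
    (continuousOn_drift hf_cont (hY.continuous ω) fun s => hY.nonneg s ω)
  drift_integrable _ ht := hY.integrable_pathDrift hf hα hγα hf_cont hf_nonneg ht
  isLocalSqMartingale := hM

namespace IsSqrtDiffusion

lemma exists_ae_isBigO_sub_pathDrift [IsFiniteMeasure μ]
    (hS : IsSqrtDiffusion μ ℱ τ S fun t ω => pathDrift f (fun s => Y s ω) t)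
    (hY : HasDriftMoments μ γ α Y) (hf : HasPowerAsymptotics f ρ α γ) (hα : 0 ≤ α)
    (hγα : 0 < γ + α)
    (hf_cont : ContinuousOn (fun p : ℝ × ℝ => f p.1 p.2) (Ici 0 ×ˢ Ici 0))
    (hf_nonneg : ∀ t y : ℝ, 0 ≤ t → 0 ≤ y → 0 ≤ f t y) :
    ∃ q < 1 + γ + α, ∀ᵐ ω ∂μ,
      (fun t => S t ω - pathDrift f (fun s => Y s ω) t) =O[atTop] fun t => t ^ q := by
  obtain ⟨q, hq, hqp⟩ := exists_between (by linarith : (1 + γ + α + 1) / 2 < 1 + γ + α)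
  obtain ⟨C, hC⟩ := hY.exists_integral_pathDrift_le hf hα hγα.le hf_cont hf_nonneg
  refine ⟨q, hqp, ?_⟩
  filter_upwards [hS.ae_isBigO (by linarith) hq hC] with ω hω
  refine (hω.add (isLittleO_const_rpow (S 0 ω) (by linarith : 0 < q)).isBigO).congr_left ?_
  intro t
  ring

theorem ae_tendsto_log_div_log [IsFiniteMeasure μ]
    (hS : IsSqrtDiffusion μ ℱ τ S fun t ω => pathDrift f (fun s => Y s ω) t)
    (hY : HasDriftMoments μ γ α Y) (hf : HasPowerAsymptotics f ρ α γ) (hρ : 0 < ρ) (hα : 0 ≤ α)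
    (hγα : 0 < γ + α)
    (hf_cont : ContinuousOn (fun p : ℝ × ℝ => f p.1 p.2) (Ici 0 ×ˢ Ici 0))
    (hf_nonneg : ∀ t y : ℝ, 0 ≤ t → 0 ≤ y → 0 ≤ f t y)
    (hA : ∀ e > 0, ∀ᵐ ω ∂μ, (fun t => t ^ (1 + γ + α - e)) =O[atTop]
      pathFunctional γ α fun s => Y s ω) :
    ∀ᵐ ω ∂μ, Tendsto (fun t => Real.log (S t ω) / Real.log t) atTop (𝓝 (1 + γ + α)) := by
  obtain ⟨q, hq, hSD⟩ := hS.exists_ae_isBigO_sub_pathDrift hY hf hα hγα hf_cont hf_nonneg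
  have hlower : ∀ᵐ ω ∂μ, ∀ e > 0,
      (fun t => t ^ (1 + γ + α - e)) =O[atTop] pathFunctional γ α fun s => Y s ω :=
    ae_forall_pos_of_forall_pos_ae
      (fun ω a b hab h => (isBigO_rpow_rpow_of_le (by linarith)).trans h) hA
  have hupper : ∀ᵐ ω ∂μ, ∀ e > 0,
      (pathFunctional γ α fun s => Y s ω) =O[atTop] fun t => t ^ (1 + γ + α + e) :=
    ae_forall_pos_of_forall_pos_ae
      (fun ω a b hab h => h.trans (isBigO_rpow_rpow_of_le (by linarith)))
      fun e he => hY.ae_isBigO_pathFunctional hα (by linarith)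
  obtain ⟨r, hqr, hrp⟩ := exists_between (max_lt (by linarith : 0 < 1 + γ + α) hq)
  filter_upwards [hSD, hlower, hupper] with ω hSD hlower hupper
  have hy_nonneg (s) : 0 ≤ Y s ω := hY.nonneg s ω
  have hAS := hf.isBigO_pathFunctional_of_isBigO_sub_pathDrift hρ hα hf_cont (hY.continuous ω)
    hy_nonneg ((le_max_left 0 q).trans_lt hqr) ((le_max_right 0 q).trans_lt hqr)
    (by simpa using hlower (1 + γ + α - r) (by linarith)) hSD
  refine tendsto_log_div_log_of_isBigO (fun e he => (hlower e he).trans hAS) fun e he => ?_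
  have hsub := hf.isLittleO_sub_pathFunctional hρ hα hγα hf_cont (hY.continuous ω) hy_nonneg hq hSD
  have hsum := (hupper e he).add (isBigO_rpow_rpow_of_le (by linarith : 1 + γ + α ≤ 1 + γ + α + e))
  simpa using (hsub.isBigO.trans hsum).add ((hupper e he).const_mul_left (2 * ρ))

theorem tendstoInDistribution_div_rpow [IsProbabilityMeasure μ]
    {Ω' : Type*} {m' : MeasurableSpace Ω'} {μ' : Measure Ω'} [IsProbabilityMeasure μ'] {Z : Ω' → ℝ}
    (hS : IsSqrtDiffusion μ ℱ τ S fun t ω => pathDrift f (fun s => Y s ω) t)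
    (hY : HasDriftMoments μ γ α Y) (hf : HasPowerAsymptotics f ρ α γ) (hρ : 0 < ρ) (hα : 0 ≤ α)
    (hγα : 0 < γ + α)
    (hf_cont : ContinuousOn (fun p : ℝ × ℝ => f p.1 p.2) (Ici 0 ×ˢ Ici 0))
    (hf_nonneg : ∀ t y : ℝ, 0 ≤ t → 0 ≤ y → 0 ≤ f t y)
    (hAZ : TendstoInDistribution
      (fun t ω => pathFunctional γ α (fun s => Y s ω) t / t ^ (1 + γ + α)) atTop Z
      (fun _ => μ) μ') :
    TendstoInDistribution (fun t ω => S t ω / t ^ (1 + γ + α)) atTop (fun ω => 2 * ρ * Z ω)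
      (fun _ => μ) μ' := by
  obtain ⟨q, hq, hSD⟩ := hS.exists_ae_isBigO_sub_pathDrift hY hf hα hγα hf_cont hf_nonneg
  refine tendstoInDistribution_div_of_ae_isLittleO hS.measurable hY.measurable_pathFunctional
    ((eventually_gt_atTop 0).mono fun t ht => Real.rpow_pos_of_pos ht _)
    ((eventually_ge_atTop 1).mono fun t ht ω => pathFunctional_nonneg (fun s => hY.nonneg s ω) ht)
    hAZ ?_
  filter_upwards [hSD] with ω hω
  exact hf.isLittleO_sub_pathFunctional hρ hα hγα hf_cont (hY.continuous ω)
    (fun s => hY.nonneg s ω) hq hω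

end IsSqrtDiffusion

end Superdiffusivity

/-- Theorem 1.3 of the paper: under (A_f) and (A_Y), the process `X = √S` satisfies
`log X_t / log t → (1+γ+α)/2` a.s. and `t^{-(1+γ+α)/2} X_t → (2ρÃ)^{1/2}` in
distribution (convergence in distribution is expressed via bounded continuous
test functions). -/
theorem stmt_19 {Ω : Type*} {m : MeasurableSpace Ω} (μ : Measure Ω) [IsProbabilityMeasure μ]
    (ℱ : Filtration ℝ m)
    -- the function f and Assumption (A_f)
    (f : ℝ → ℝ → ℝ)
    (hf_cont : ContinuousOn (fun p : ℝ × ℝ => f p.1 p.2) (Set.Ici 0 ×ˢ Set.Ici 0))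
    (hf_nonneg : ∀ t y : ℝ, 0 ≤ t → 0 ≤ y → 0 ≤ f t y)
    (ρ α γ : ℝ) (hρ : 0 < ρ) (hα : 0 ≤ α) (hβ : 0 < γ + α)
    (hA : ∀ ε > (0:ℝ), ∃ r ≥ (0:ℝ), ∀ t y : ℝ, 0 ≤ t → 0 ≤ y → r ≤ t + y →
      |f t y * (1 + t) ^ (-γ) * (1 + y) ^ (-α) - ρ| ≤ ε)
    -- the processes Y and S
    (Y S : ℝ → Ω → ℝ)
    (hY_nonneg : ∀ t ω, 0 ≤ Y t ω) (hY_cont : ∀ ω, Continuous fun t => Y t ω)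
    (hY_adapted : Adapted ℱ Y)
    (hS_nonneg : ∀ t ω, 0 ≤ S t ω) (hS_cont : ∀ ω, Continuous fun t => S t ω)
    (hS_adapted : Adapted ℱ S)
    -- M = 2∫√S dB is a local martingale with quadratic variation 4∫_0^t S_s ds,
    -- localized by the stopping times τ_N = inf{t : S_t ≥ N}
    (τ : ℕ → Ω → ℝ)
    (hτ_nonneg : ∀ N ω, 0 ≤ τ N ω)
    (hτ_bound : ∀ N ω (t : ℝ), 0 ≤ t → t ≤ τ N ω → S t ω ≤ N)
    (hτ_tend : ∀ ω, Tendsto (fun N => τ N ω) atTop atTop)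
    (hM_int : ∀ (N : ℕ) (t : ℝ), 0 ≤ t →
      Integrable (fun ω => (driftM f Y S (min t (τ N ω)) ω) ^ 2) μ)
    (hM_loc : ∀ (N : ℕ) (s t : ℝ), 0 ≤ s → s ≤ t →
      (μ[(fun ω => driftM f Y S (min t (τ N ω)) ω) | ℱ s])
        =ᵐ[μ] fun ω => driftM f Y S (min s (τ N ω)) ω)
    (hM_qv : ∀ (N : ℕ) (s t : ℝ), 0 ≤ s → s ≤ t →
      (μ[(fun ω => (driftM f Y S (min t (τ N ω)) ω) ^ 2
          - 4 * ∫ u in (0:ℝ)..(min t (τ N ω)), S u ω) | ℱ s])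
        =ᵐ[μ] fun ω => (driftM f Y S (min s (τ N ω)) ω) ^ 2
          - 4 * ∫ u in (0:ℝ)..(min s (τ N ω)), S u ω)
    -- Hypothesis (A_Y)(a): ∫_0^1 E[Y_t^α] dt < ∞
    (hYa : ∀ t ∈ Set.Icc (0:ℝ) 1, Integrable (fun ω => (Y t ω) ^ α) μ)
    (hYa' : IntervalIntegrable (fun t => ∫ ω, (Y t ω) ^ α ∂μ) MeasureTheory.volume 0 1)
    -- Hypothesis (A_Y)(b): A_t/t^{1+γ+α} converges in distribution to Ã ≥ 0
    {Ω' : Type*} {m' : MeasurableSpace Ω'} (μ' : Measure Ω') [IsProbabilityMeasure μ']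
    (Atil : Ω' → ℝ) (hAtil_nonneg : ∀ ω', 0 ≤ Atil ω')
    (hYb : ∀ g : BoundedContinuousFunction ℝ ℝ,
      Tendsto (fun t : ℝ =>
          ∫ ω, g ((∫ s in (1:ℝ)..t, s ^ γ * (Y s ω) ^ α) / t ^ (1 + γ + α)) ∂μ)
        atTop (nhds (∫ ω', g (Atil ω') ∂μ')))
    -- Hypothesis (A_Y)(c): for every ε > 0, t^ε A_t/t^{1+γ+α} → ∞ a.s.
    (hYc : ∀ ε > (0:ℝ), ∀ᵐ ω ∂μ,
      Tendsto (fun t : ℝ =>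
          t ^ ε * (∫ s in (1:ℝ)..t, s ^ γ * (Y s ω) ^ α) / t ^ (1 + γ + α))
        atTop atTop)
    -- Hypothesis (A_Y)(d): sup_{t≥1} E[A_t]/t^{1+γ+α} < ∞
    (hYd : ∃ CA : ℝ, ∀ t : ℝ, 1 ≤ t →
      Integrable (fun ω => ∫ s in (1:ℝ)..t, s ^ γ * (Y s ω) ^ α) μ ∧
      ∫ ω, (∫ s in (1:ℝ)..t, s ^ γ * (Y s ω) ^ α) ∂μ ≤ CA * t ^ (1 + γ + α)) :
    -- Conclusions for X = √S
    (∀ᵐ ω ∂μ,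
      Tendsto (fun t : ℝ => Real.log (Real.sqrt (S t ω)) / Real.log t)
        atTop (nhds ((1 + γ + α) / 2))) ∧
    ∀ g : BoundedContinuousFunction ℝ ℝ,
      Tendsto (fun t : ℝ => ∫ ω, g (Real.sqrt (S t ω) / t ^ ((1 + γ + α) / 2)) ∂μ)
        atTop (nhds (∫ ω', g (Real.sqrt (2 * ρ * Atil ω')) ∂μ')) := by
  have hY : HasDriftMoments μ γ α Y :=
    ⟨hY_nonneg, hY_cont, fun t => (hY_adapted t).mono (ℱ.le t) le_rfl, hYa, hYa', hYd⟩
  have hM : IsLocalSqMartingale μ ℱ τ (driftM f Y S) fun t ω => 4 * ∫ u in (0 : ℝ)..t, S u ω :=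
    ⟨hτ_nonneg, hτ_tend, hM_int, hM_loc, hM_qv⟩
  have hS := hY.isSqrtDiffusion hA hα hβ.le hf_cont hf_nonneg hS_nonneg hS_cont hS_adapted hM
  constructor
  · filter_upwards [hS.ae_tendsto_log_div_log hY hA hρ hα hβ hf_cont hf_nonneg
      fun e he => (hYc e he).mono fun ω hω => isBigO_rpow_sub_of_tendsto_atTop hω] with ω hω
    refine (hω.div_const 2).congr fun t => ?_
    rw [Real.log_sqrt (hS_nonneg t ω), div_right_comm]
  · have hAZ := (tendstoInDistribution_iff_forall_tendsto_integral fun t =>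
      ((hY.measurable_pathFunctional t).div_const (t ^ (1 + γ + α))).aemeasurable).2 hYb
    have hSZ := (hS.tendstoInDistribution_div_rpow hY hA hρ hα hβ hf_cont hf_nonneg
      hAZ).continuous_comp Real.continuous_sqrt
    intro g
    refine ((tendstoInDistribution_iff_forall_tendsto_integral hSZ.forall_aemeasurable).1
      hSZ g).congr' ?_
    filter_upwards [eventually_gt_atTop 0] with t ht
    simp only [Function.comp_apply, Real.sqrt_div (hS_nonneg t _), sqrt_rpow_eq_rpow_half ht.le]
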